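/- There exists a constant C > 0 such that for every squared Horton set H of n points, every point of H is a vertex of at most C·n empty triangles of H. -/

import Mathlib

open scoped Classical

noncomputable section

/-- Euclidean distance between two points of the plane `ℝ × ℝ`. -/
def elen (p q : ℝ × ℝ) : ℝ := Real.sqrt ((p.1 - q.1) ^ 2 + (p.2 - q.2) ^ 2)

/-- Orientation determinant of an ordered triple of points. -/
def orient (a b c : ℝ × ℝ) : ℝ :=
  (b.1 - a.1) * (c.2 - a.2) - (b.2 - a.2) * (c.1 - a.1)

/-- A planar point set is in general position if no three distinct points are collinear. -/
def GeneralPosition (S : Set (ℝ × ℝ)) : Prop :=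
  ∀ a ∈ S, ∀ b ∈ S, ∀ c ∈ S, a ≠ b → a ≠ c → b ≠ c →
    ¬ Collinear ℝ ({a, b, c} : Set (ℝ × ℝ))

/-- No two points of `S` share an `x`-coordinate. -/
def DistinctX (S : Set (ℝ × ℝ)) : Prop :=
  ∀ a ∈ S, ∀ b ∈ S, a ≠ b → a.1 ≠ b.1

/-- `p` lies strictly below the (non-vertical) line through `a` and `b`, where `a.1 < b.1`. -/
def StrictlyBelow (p a b : ℝ × ℝ) : Prop :=
  (b.1 - a.1) * (p.2 - a.2) < (b.2 - a.2) * (p.1 - a.1)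

/-- `p` lies strictly above the (non-vertical) line through `a` and `b`, where `a.1 < b.1`. -/
def StrictlyAbove (p a b : ℝ × ℝ) : Prop :=
  (b.2 - a.2) * (p.1 - a.1) < (b.1 - a.1) * (p.2 - a.2)

/-- `Y` is high above `X`: every line through two points of `Y` is above every point of `X`. -/
def HighAbove (Y X : Set (ℝ × ℝ)) : Prop :=
  ∀ a ∈ Y, ∀ b ∈ Y, a.1 < b.1 → ∀ p ∈ X, StrictlyBelow p a b

/-- `X` is deep below `Y`: every line through two points of `X` is below every point of `Y`. -/
def DeepBelow (X Y : Set (ℝ × ℝ)) : Prop :=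
  ∀ a ∈ X, ∀ b ∈ X, a.1 < b.1 → ∀ p ∈ Y, StrictlyAbove p a b

/-- The even-indexed points of `H` in increasing order of `x`-coordinate (`H₀`). -/
def evenPart (H : Finset (ℝ × ℝ)) : Finset (ℝ × ℝ) :=
  H.filter fun p => Even (H.filter fun q => q.1 < p.1).card

/-- The odd-indexed points of `H` in increasing order of `x`-coordinate (`H₁`). -/
def oddPart (H : Finset (ℝ × ℝ)) : Finset (ℝ × ℝ) :=
  H.filter fun p => ¬ Even (H.filter fun q => q.1 < p.1).card

/-- Horton sets. -/
inductive IsHorton : Finset (ℝ × ℝ) → Prop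
  | small (H : Finset (ℝ × ℝ)) (hgp : GeneralPosition ↑H) (hx : DistinctX ↑H)
      (hcard : H.card ≤ 2) : IsHorton H
  | split (H : Finset (ℝ × ℝ)) (hgp : GeneralPosition ↑H) (hx : DistinctX ↑H)
      (hcard : 2 < H.card) (h0 : IsHorton (evenPart H)) (h1 : IsHorton (oddPart H))
      (hhigh : HighAbove ↑(oddPart H) ↑(evenPart H))
      (hdeep : DeepBelow ↑(evenPart H) ↑(oddPart H)) : IsHorton H

/-- `t` is an empty triangle of the point set `S`: a three-element non-collinear subset of `S`
whose open interior contains no point of `S`. -/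
def IsEmptyTriangleOf (S : Set (ℝ × ℝ)) (t : Finset (ℝ × ℝ)) : Prop :=
  t.card = 3 ∧ (↑t : Set (ℝ × ℝ)) ⊆ S ∧ ¬ Collinear ℝ (↑t : Set (ℝ × ℝ)) ∧
    ∀ p ∈ S, p ∉ interior (convexHull ℝ (↑t : Set (ℝ × ℝ)))

/-- `τ S`: the number of empty triangles of `S`. -/
def tau (S : Set (ℝ × ℝ)) : ℕ :=
  {t : Finset (ℝ × ℝ) | IsEmptyTriangleOf S t}.ncard

/-- The number of empty triangles of `S` stabbed by the point `q`. -/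
def stabbedCount (S : Set (ℝ × ℝ)) (q : ℝ × ℝ) : ℕ :=
  {t : Finset (ℝ × ℝ) | IsEmptyTriangleOf S t ∧
    q ∈ interior (convexHull ℝ (↑t : Set (ℝ × ℝ)))}.ncard

/-- The number of empty triangles of `S` having `q` as a vertex. -/
def incidentCount (S : Set (ℝ × ℝ)) (q : ℝ × ℝ) : ℕ :=
  {t : Finset (ℝ × ℝ) | IsEmptyTriangleOf S t ∧ q ∈ t}.ncard

/-- The `m × m` integer grid `{1,…,m} × {1,…,m}`, viewed inside `ℝ × ℝ`. -/
def grid (m : ℕ) : Finset (ℝ × ℝ) :=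
  (Finset.Icc 1 m ×ˢ Finset.Icc 1 m).image fun p => ((p.1 : ℝ), (p.2 : ℝ))

/-- The points of the grid on the line spanned by `a` and `b`. -/
def gridLine (m : ℕ) (a b : ℝ × ℝ) : Finset (ℝ × ℝ) :=
  (grid m).filter fun x => Collinear ℝ ({a, b, x} : Set (ℝ × ℝ))

/-- Rotation of the plane by (minus) 90 degrees. -/
def rotCW (p : ℝ × ℝ) : ℝ × ℝ := (p.2, -p.1)

/-- `f` is an `ε`-perturbation of the grid `{1,…,m} × {1,…,m}` turning it into a
squared Horton set (of `m ^ 2` points). -/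
structure IsSquaredHorton (m : ℕ) (ε : ℝ) (f : ℝ × ℝ → ℝ × ℝ) : Prop where
  eps_pos : 0 < ε
  eps_lt : ε < 1 / 4
  inj : Set.InjOn f ↑(grid m)
  close : ∀ p ∈ grid m, elen (f p) p ≤ ε
  orient_iff : ∀ a ∈ grid m, ∀ b ∈ grid m, ∀ c ∈ grid m,
    orient a b c ≠ 0 → (0 < orient a b c ↔ 0 < orient (f a) (f b) (f c))
  nonvertical : ∀ a ∈ grid m, ∀ b ∈ grid m, a ≠ b → a.1 ≠ b.1 →
    IsHorton ((gridLine m a b).image f)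
  vertical : ∀ a ∈ grid m, ∀ b ∈ grid m, a ≠ b → a.1 = b.1 →
    IsHorton (((gridLine m a b).image f).image rotCW)

/-!
An empty triangle of `H` with vertex `p` comes from a triangle of the grid without interior lattice
points: condition (1) carries an interior point over to `H`. Such a lattice triangle is thin: for
some primitive vector `w` parallel to one of its sides, its other two vertices lie on one of eight
fixed pairs of lattice lines of direction `w` near `p`, and two of the three vertices share a line.

A grid line whose direction `w` has sup norm `d` contains at most `K = ⌊m / d⌋ + 1` points, and
its image is a Horton set. If a side of an empty triangle lies on the line, all points of the line
inside this side are on the same side of it, away from the third vertex. In a Horton set of `K`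
points every point has only `O(log K)` such partners, because passing to the half containing the
point loses at most its two neighbours in `x`-order. So each pair of lines carries `O(K log K)`
empty triangles; the case where both lines pass through `p` follows by the same halving.

There are at most `8 d` vectors of sup norm `d` and `d * K ≤ 2 m`, so the triangles at `p` number
`O(m) * ∑ d, log (⌊m / d⌋ + 1)`. The last sum is `O(m)`: its `d`-th term counts the `j` with
`d ≤ m / 2 ^ j`, and `∑ j, m / 2 ^ j ≤ 2 m`.
-/

section Orientation

variable {R : Type*} [CommRing R]

/-- The wedge product `u₁ v₂ - u₂ v₁` of two plane vectors. -/
def wedge (u v : R × R) : R := u.1 * v.2 - u.2 * v.1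

/-- The orientation determinant of an ordered triple of points; over `ℝ` it is definitionally
`orient`. -/
def orientDet (a b c : R × R) : R := wedge (b - a) (c - a)

/-- `x` lies in the open triangle `abc`. The factor `s` makes the notion independent of the
orientation of `abc`: only its sign matters. -/
def InTriangle [LT R] (a b c x : R × R) : Prop :=
  ∃ s : R, 0 < s * orientDet a b x ∧ 0 < s * orientDet b c x ∧ 0 < s * orientDet c a x

lemma wedge_swap (u v : R × R) : wedge v u = -wedge u v := by
  unfold wedge; ring

lemma wedge_self (u : R × R) : wedge u u = 0 := by
  unfold wedge; ring

lemma wedge_add_left (u v w : R × R) : wedge (u + v) w = wedge u w + wedge v w := by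
  simp only [wedge, Prod.fst_add, Prod.snd_add]; ring

lemma wedge_sub_left (u v w : R × R) : wedge (u - v) w = wedge u w - wedge v w := by
  simp only [wedge, Prod.fst_sub, Prod.snd_sub]; ring

lemma wedge_add_right (u v w : R × R) : wedge u (v + w) = wedge u v + wedge u w := by
  simp only [wedge, Prod.fst_add, Prod.snd_add]; ring

lemma wedge_sub_right (u v w : R × R) : wedge u (v - w) = wedge u v - wedge u w := by
  simp only [wedge, Prod.fst_sub, Prod.snd_sub]; ring

lemma wedge_smul_left (t : R) (u v : R × R) : wedge (t • u) v = t * wedge u v := by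
  simp only [wedge, Prod.smul_fst, Prod.smul_snd, smul_eq_mul]; ring

lemma wedge_smul_right (t : R) (u v : R × R) : wedge u (t • v) = t * wedge u v := by
  rw [wedge_swap, wedge_smul_left, wedge_swap u v, mul_neg, neg_neg]

lemma wedge_smul_eq_smul_add_smul (u v w : R × R) :
    wedge u v • w = wedge w v • u + wedge u w • v := by
  ext <;> simp only [wedge, Prod.fst_add, Prod.snd_add, Prod.smul_fst, Prod.smul_snd,
    smul_eq_mul] <;> ring

lemma orientDet_rotate (a b c : R × R) : orientDet b c a = orientDet a b c := by
  simp only [orientDet, wedge, Prod.fst_sub, Prod.snd_sub]; ring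

lemma orientDet_swap (a b c : R × R) : orientDet b a c = -orientDet a b c := by
  simp only [orientDet, wedge, Prod.fst_sub, Prod.snd_sub]; ring

lemma orientDet_swap_right (a b c : R × R) : orientDet a c b = -orientDet a b c := by
  rw [← orientDet_rotate, orientDet_swap, orientDet_rotate]

lemma orientDet_add_add_eq (a b c x : R × R) :
    orientDet a b x + orientDet b c x + orientDet c a x = orientDet a b c := by
  simp only [orientDet, wedge, Prod.fst_sub, Prod.snd_sub]; ring

lemma inTriangle_rotate [LT R] {a b c x : R × R} :
    InTriangle b c a x ↔ InTriangle a b c x :=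
  exists_congr fun _ => by tauto

lemma inTriangle_swap [LT R] {a b c x : R × R} :
    InTriangle b a c x ↔ InTriangle a b c x := by
  suffices h : ∀ a b : R × R, InTriangle a b c x → InTriangle b a c x from ⟨h b a, h a b⟩
  rintro a b ⟨s, hab, hbc, hca⟩
  refine ⟨-s, ?_, ?_, ?_⟩ <;> rw [orientDet_swap, neg_mul_neg] <;> assumption

lemma inTriangle_swap_right [LT R] {a b c x : R × R} :
    InTriangle a c b x ↔ InTriangle a b c x := by
  rw [← inTriangle_rotate, inTriangle_swap, inTriangle_rotate]

end Orientation

lemma InTriangle.mem_convexHull {K : Type*} [Field K] [LinearOrder K] [IsStrictOrderedRing K]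
    {a b c x : K × K} (h : InTriangle a b c x) : x ∈ convexHull K {a, b, c} := by
  obtain ⟨s, hab, hbc, hca⟩ := h
  have hsum := orientDet_add_add_eq a b c x
  have hS : 0 < s * orientDet a b c := by rw [← hsum]; linarith
  have hS0 : orientDet a b c ≠ 0 := right_ne_zero_of_mul hS.ne'
  have weight_nonneg {t : K} (ht : 0 < s * t) : 0 ≤ t / orientDet a b c := by
    rw [← mul_div_mul_left _ _ (left_ne_zero_of_mul ht.ne')]
    exact (div_pos ht hS).le
  have barycentric : x = ∑ i : Fin 3, (![orientDet b c x / orientDet a b c,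
      orientDet c a x / orientDet a b c, orientDet a b x / orientDet a b c] i) • ![a, b, c] i := by
    simp only [Fin.sum_univ_three, Matrix.cons_val]
    ext <;> simp only [Prod.fst_add, Prod.snd_add, Prod.smul_fst, Prod.smul_snd, smul_eq_mul] <;>
      field_simp <;> simp only [orientDet, wedge, Prod.fst_sub, Prod.snd_sub] <;> ring
  rw [barycentric]
  refine (convex_convexHull K _).sum_mem (fun i _ => ?_) ?_ fun i _ => subset_convexHull K _ ?_
  · fin_cases i
    exacts [weight_nonneg hbc, weight_nonneg hca, weight_nonneg hab]
  · simp only [Fin.sum_univ_three, Matrix.cons_val]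
    rw [← add_div, ← add_div, div_eq_one_iff_eq hS0, ← hsum]
    ring
  · fin_cases i <;> simp

lemma InTriangle.mem_interior_convexHull {a b c x : ℝ × ℝ} (h : InTriangle a b c x) :
    x ∈ interior (convexHull ℝ {a, b, c}) := by
  obtain ⟨s, hx⟩ := h
  have isOpen_side (a b : ℝ × ℝ) : IsOpen {y | 0 < s * orientDet a b y} := by
    unfold orientDet wedge
    exact isOpen_lt continuous_const (by fun_prop)
  exact interior_maximal (fun y hy => InTriangle.mem_convexHull ⟨s, hy⟩)
    ((isOpen_side a b).inter ((isOpen_side b c).inter (isOpen_side c a))) hx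

section EmptyPairs

variable {ι : Type*} (g : ι → ℝ × ℝ) (S : Finset ι) (p : ι)

/-- The ordered pairs `(a, b)` of elements of `S` that span with `p` a triangle without a point
of `S` inside, the points being placed in the plane by `g`. -/
def emptyPairs : Finset (ι × ι) :=
  (S.erase p).offDiag.filter fun ab => ∀ c ∈ S, ¬ InTriangle (g p) (g ab.1) (g ab.2) (g c)

variable {g S p}

lemma mem_emptyPairs {a b : ι} :
    (a, b) ∈ emptyPairs g S p ↔ (a ∈ S ∧ a ≠ p) ∧ (b ∈ S ∧ b ≠ p) ∧ a ≠ b ∧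
      ∀ c ∈ S, ¬ InTriangle (g p) (g a) (g b) (g c) := by
  simp only [emptyPairs, Finset.mem_filter, Finset.mem_offDiag, Finset.mem_erase, and_assoc]
  tauto

lemma emptyPairs_swap {a b : ι} (h : (a, b) ∈ emptyPairs g S p) : (b, a) ∈ emptyPairs g S p := by
  obtain ⟨ha, hb, hab, hempty⟩ := mem_emptyPairs.1 h
  exact mem_emptyPairs.2 ⟨hb, ha, hab.symm, fun c hc => inTriangle_swap_right.not.2 (hempty c hc)⟩

variable (g S p) in
lemma incidentCount_le_card_emptyPairs :
    incidentCount ↑(S.image g) (g p) ≤ (emptyPairs g S p).card := by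
  let triangle (ab : ι × ι) : Finset (ℝ × ℝ) := {g p, g ab.1, g ab.2}
  suffices h : {t | IsEmptyTriangleOf ↑(S.image g) t ∧ g p ∈ t} ⊆
      ↑((emptyPairs g S p).image triangle) by
    refine (Set.ncard_le_ncard h (Finset.finite_toSet _)).trans ?_
    rw [Set.ncard_coe_finset]
    exact Finset.card_image_le
  rintro t ⟨⟨hcard, hsub, -, hempty⟩, hpt⟩
  obtain ⟨x, y, hxy, hxyt⟩ : ∃ x y, x ≠ y ∧ t.erase (g p) = {x, y} :=
    Finset.card_eq_two.1 (by rw [Finset.card_erase_of_mem hpt, hcard])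
  have preimage {z : ℝ × ℝ} (hz : z ∈ t.erase (g p)) : ∃ c ∈ S, c ≠ p ∧ g c = z := by
    obtain ⟨c, hc, rfl⟩ := Finset.mem_image.1 (hsub (Finset.mem_of_mem_erase hz))
    exact ⟨c, hc, ne_of_apply_ne g (Finset.ne_of_mem_erase hz), rfl⟩
  obtain ⟨a, ha, hap, rfl⟩ := preimage (z := x) (by simp [hxyt])
  obtain ⟨b, hb, hbp, rfl⟩ := preimage (z := y) (by simp [hxyt])
  have ht : triangle (a, b) = t := by rw [← Finset.insert_erase hpt, hxyt]
  refine Finset.mem_image.2 ⟨(a, b), mem_emptyPairs.2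
    ⟨⟨ha, hap⟩, ⟨hb, hbp⟩, ne_of_apply_ne g hxy, fun c hc hin => ?_⟩, ht⟩
  refine hempty (g c) (Finset.mem_image_of_mem g hc) ?_
  simpa [← ht, triangle] using hin.mem_interior_convexHull

lemma card_emptyPairs_le_image (hg : Set.InjOn g S) (hp : p ∈ S) :
    (emptyPairs g S p).card ≤ (emptyPairs id (S.image g) (g p)).card := by
  refine Finset.card_le_card_of_injOn (Prod.map g g) ?_ ?_
  · rintro ⟨a, b⟩ hab
    obtain ⟨⟨ha, hap⟩, ⟨hb, hbp⟩, hne, hempty⟩ := mem_emptyPairs.1 hab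
    exact mem_emptyPairs.2 ⟨⟨Finset.mem_image_of_mem g ha, hg.ne ha hp hap⟩,
      ⟨Finset.mem_image_of_mem g hb, hg.ne hb hp hbp⟩, hg.ne ha hb hne,
      Finset.forall_mem_image.2 hempty⟩
  · refine (hg.prodMap hg).mono ?_
    rintro ⟨a, b⟩ hab
    obtain ⟨⟨ha, -⟩, ⟨hb, -⟩, -⟩ := mem_emptyPairs.1 hab
    exact ⟨ha, hb⟩

end EmptyPairs

lemma card_le_mul_of_card_fiber_le {α β : Type*} {P : Finset (α × β)} {A : Finset α}
    {F : α → Finset β} {n : ℕ} (hP : ∀ ab ∈ P, ab.1 ∈ A ∧ ab.2 ∈ F ab.1)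
    (hF : ∀ a ∈ A, (F a).card ≤ n) : P.card ≤ A.card * n := by
  have hsub : P ⊆ (A.sigma F).map (Equiv.sigmaEquivProd α β).toEmbedding := by
    rintro ⟨a, b⟩ hab
    simpa using hP _ hab
  refine (Finset.card_le_card hsub).trans ?_
  rw [Finset.card_map, Finset.card_sigma, ← smul_eq_mul]
  exact Finset.sum_le_card_nsmul A _ n hF

section XRank

variable {H : Finset (ℝ × ℝ)} {x y : ℝ × ℝ}

/-- The rank of `p` in `H`: its position, counted from `0`, in the order of increasing
`x`-coordinate. -/
def xRank (H : Finset (ℝ × ℝ)) (p : ℝ × ℝ) : ℕ := (H.filter fun q => q.1 < p.1).card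

lemma mem_evenPart : x ∈ evenPart H ↔ x ∈ H ∧ Even (xRank H x) := by
  simp only [evenPart, xRank, Finset.mem_filter]

lemma mem_oddPart : x ∈ oddPart H ↔ x ∈ H ∧ ¬ Even (xRank H x) := by
  simp only [oddPart, xRank, Finset.mem_filter]

lemma xRank_lt_xRank (hx : x ∈ H) (hxy : x.1 < y.1) : xRank H x < xRank H y := by
  refine Finset.card_lt_card ((Finset.ssubset_iff_of_subset ?_).2 ⟨x, by simp [hx, hxy], by simp⟩)
  exact Finset.monotone_filter_right _ fun z _ hz => hz.trans hxy

lemma xRank_lt_card (hx : x ∈ H) : xRank H x < H.card :=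
  Finset.card_lt_card <|
    (Finset.ssubset_iff_of_subset (Finset.filter_subset _ _)).2 ⟨x, hx, by simp⟩

lemma xRank_injOn (hH : DistinctX ↑H) : Set.InjOn (xRank H) H := by
  intro x hx y hy hxy
  by_contra hne
  rcases lt_or_gt_of_ne (hH x hx y hy hne) with h | h
  · exact (xRank_lt_xRank hx h).ne hxy
  · exact (xRank_lt_xRank hy h).ne' hxy

lemma exists_xRank_eq_succ (hH : DistinctX ↑H) (hx : x ∈ H) (hy : y ∈ H) (hxy : x.1 < y.1) :
    ∃ c ∈ H, x.1 < c.1 ∧ c.1 ≤ y.1 ∧ xRank H c = xRank H x + 1 := by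
  obtain ⟨c, hc, hmin⟩ := Finset.exists_min_image (H.filter fun q => x.1 < q.1) Prod.fst
    ⟨y, by simp [hy, hxy]⟩
  simp only [Finset.mem_filter] at hc hmin
  refine ⟨c, hc.1, hc.2, hmin y ⟨hy, hxy⟩, ?_⟩
  have left_of_c : (H.filter fun q => q.1 < c.1) = insert x (H.filter fun q => q.1 < x.1) := by
    ext z
    simp only [Finset.mem_filter, Finset.mem_insert]
    refine ⟨fun ⟨hz, hzc⟩ => or_iff_not_imp_left.2 fun hzx => ⟨hz, ?_⟩, ?_⟩
    · refine (hH z hz x hx hzx).lt_or_gt.resolve_right fun hxz => ?_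
      exact (hmin z ⟨hz, hxz⟩).not_gt hzc
    · rintro (rfl | ⟨hz, hzx⟩)
      exacts [⟨hx, hc.2⟩, ⟨hz, hzx.trans hc.2⟩]
  rw [xRank, left_of_c, Finset.card_insert_of_notMem (by simp), xRank]

lemma exists_between_of_even_xRank_iff (hH : DistinctX ↑H) (hx : x ∈ H) (hy : y ∈ H)
    (hxy : x.1 < y.1) (hpar : Even (xRank H x) ↔ Even (xRank H y)) :
    ∃ c ∈ H, x.1 < c.1 ∧ c.1 < y.1 ∧ (Even (xRank H c) ↔ ¬ Even (xRank H x)) := by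
  obtain ⟨c, hc, hxc, hcy, hrank⟩ := exists_xRank_eq_succ hH hx hy hxy
  have hc_par : Even (xRank H c) ↔ ¬ Even (xRank H x) := by rw [hrank, Nat.even_add_one]
  refine ⟨c, hc, hxc, hcy.lt_of_ne (hH c hc y hy ?_), hc_par⟩
  rintro rfl
  tauto

lemma card_le_half_of_xRank_mod_two_eq {X : Finset (ℝ × ℝ)} (hH : DistinctX ↑H) (hX : X ⊆ H)
    {r : ℕ} (hr : ∀ x ∈ X, xRank H x % 2 = r) : X.card ≤ (H.card + 1) / 2 := by
  rw [← Finset.card_range ((H.card + 1) / 2)]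
  refine Finset.card_le_card_of_injOn (fun x => xRank H x / 2) (fun x hx => ?_)
    fun x hx y hy hxy => xRank_injOn hH (hX hx) (hX hy) ?_
  · have := xRank_lt_card (hX hx)
    simp only [Finset.coe_range, Set.mem_Iio]
    omega
  · have := hr x hx
    have := hr y hy
    dsimp only at hxy
    omega

end XRank

/-- `H` splits into `X` and `Y`, the two halves of a Horton set in either order: they alternate
along the `x`-axis, every line through two points of `X` has `Y` on one side, and every line
through two points of `Y` has `X` on the opposite side. The sign of `s` tells whether `X` is the
lower half (`0 < s`) or the upper one. -/
structure IsHortonSplit (H X Y : Finset (ℝ × ℝ)) (s : ℝ) : Prop where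
  sign_ne_zero : s ≠ 0
  distinctX : DistinctX ↑H
  fst_subset : X ⊆ H
  snd_subset : Y ⊆ H
  subset_union : H ⊆ X ∪ Y
  card_fst_le : X.card ≤ (H.card + 1) / 2
  card_snd_le : Y.card ≤ (H.card + 1) / 2
  exists_snd_between : ∀ a ∈ X, ∀ b ∈ X, a.1 < b.1 → ∃ c ∈ Y, a.1 < c.1 ∧ c.1 < b.1
  exists_fst_between : ∀ a ∈ Y, ∀ b ∈ Y, a.1 < b.1 → ∃ c ∈ X, a.1 < c.1 ∧ c.1 < b.1
  orientDet_fst : ∀ a ∈ X, ∀ b ∈ X, a.1 < b.1 → ∀ c ∈ Y, 0 < s * orientDet a b c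
  orientDet_snd : ∀ a ∈ Y, ∀ b ∈ Y, a.1 < b.1 → ∀ c ∈ X, 0 < -s * orientDet a b c

lemma IsHortonSplit.symm {H X Y : Finset (ℝ × ℝ)} {s : ℝ} (h : IsHortonSplit H X Y s) :
    IsHortonSplit H Y X (-s) where
  sign_ne_zero := neg_ne_zero.2 h.sign_ne_zero
  distinctX := h.distinctX
  fst_subset := h.snd_subset
  snd_subset := h.fst_subset
  subset_union := Finset.union_comm X Y ▸ h.subset_union
  card_fst_le := h.card_snd_le
  card_snd_le := h.card_fst_le
  exists_snd_between := h.exists_fst_between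
  exists_fst_between := h.exists_snd_between
  orientDet_fst := h.orientDet_snd
  orientDet_snd := by simpa only [neg_neg] using h.orientDet_fst

lemma isHortonSplit_evenPart_oddPart {H : Finset (ℝ × ℝ)} (hH : DistinctX ↑H)
    (hhigh : HighAbove ↑(oddPart H) ↑(evenPart H)) (hdeep : DeepBelow ↑(evenPart H) ↑(oddPart H)) :
    IsHortonSplit H (evenPart H) (oddPart H) 1 where
  sign_ne_zero := one_ne_zero
  distinctX := hH
  fst_subset := Finset.filter_subset _ _
  snd_subset := Finset.filter_subset _ _
  subset_union x hx := by
    rw [Finset.mem_union, mem_evenPart, mem_oddPart]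
    tauto
  card_fst_le := card_le_half_of_xRank_mod_two_eq hH (Finset.filter_subset _ _)
    fun _ hx => Nat.even_iff.1 (mem_evenPart.1 hx).2
  card_snd_le := card_le_half_of_xRank_mod_two_eq hH (Finset.filter_subset _ _)
    fun _ hx => Nat.not_even_iff.1 (mem_oddPart.1 hx).2
  exists_snd_between a ha b hb hab := by
    rw [mem_evenPart] at ha hb
    obtain ⟨c, hc, hac, hcb, hpar⟩ :=
      exists_between_of_even_xRank_iff hH ha.1 hb.1 hab (iff_of_true ha.2 hb.2)
    exact ⟨c, mem_oddPart.2 ⟨hc, by tauto⟩, hac, hcb⟩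
  exists_fst_between a ha b hb hab := by
    rw [mem_oddPart] at ha hb
    obtain ⟨c, hc, hac, hcb, hpar⟩ :=
      exists_between_of_even_xRank_iff hH ha.1 hb.1 hab (iff_of_false ha.2 hb.2)
    exact ⟨c, mem_evenPart.2 ⟨hc, by tauto⟩, hac, hcb⟩
  orientDet_fst a ha b hb hab c hc := by
    rw [one_mul]
    exact sub_pos.2 (hdeep a ha b hb hab c hc)
  orientDet_snd a ha b hb hab c hc := by
    rw [neg_one_mul, neg_pos]
    exact sub_neg.2 (hhigh a ha b hb hab c hc)

theorem IsHorton.induction_split {motive : Finset (ℝ × ℝ) → ℝ × ℝ → Prop}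
    {H : Finset (ℝ × ℝ)} (hH : IsHorton H)
    (small : ∀ H p, H.card ≤ 2 → p ∈ H → motive H p)
    (split : ∀ H X Y s p, IsHortonSplit H X Y s → IsHorton X → IsHorton Y → 2 < H.card → p ∈ X →
      motive X p → motive H p) :
    ∀ p ∈ H, motive H p := by
  induction hH with
  | small H _ _ hcard => exact fun p => small H p hcard
  | split H _ hx hcard heven hodd hhigh hdeep ih_even ih_odd =>
    intro p hp
    have hsplit := isHortonSplit_evenPart_oddPart hx hhigh hdeep
    rcases Finset.mem_union.1 (hsplit.subset_union hp) with hpe | hpo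
    · exact split H _ _ _ p hsplit heven hodd hcard hpe (ih_even p hpe)
    · exact split H _ _ _ p hsplit.symm hodd heven hcard hpo (ih_odd p hpo)

section OneSided

variable {H X Y : Finset (ℝ × ℝ)} {p a b c : ℝ × ℝ} {s : ℝ}

/-- The points of `H` lying, in `x`-order, strictly between `a` and `b` are all (weakly) on the
same side of the line `ab`. -/
def OneSided (H : Finset (ℝ × ℝ)) (a b : ℝ × ℝ) : Prop :=
  ∃ s : ℝ, s ≠ 0 ∧ ∀ c ∈ H, c.1 ∈ Set.uIoo a.1 b.1 → 0 ≤ s * orientDet a b c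

lemma OneSided.symm (h : OneSided H a b) : OneSided H b a := by
  obtain ⟨s, hs, hside⟩ := h
  refine ⟨-s, neg_ne_zero.2 hs, fun c hc hcab => ?_⟩
  rw [orientDet_swap, neg_mul_neg]
  exact hside c hc (Set.uIoo_comm a.1 b.1 ▸ hcab)

lemma OneSided.mono (hX : X ⊆ H) (h : OneSided H a b) : OneSided X a b :=
  let ⟨s, hs, hside⟩ := h
  ⟨s, hs, fun c hc => hside c (hX hc)⟩

lemma IsHortonSplit.notMem_Ioo_of_oneSided (h : IsHortonSplit H X Y s) (hp : p ∈ X) (ha : a ∈ Y)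
    (hone : OneSided H p a) (hc : c ∈ H) : c.1 ∉ Set.Ioo p.1 a.1 := by
  rintro ⟨hpc, hca⟩
  obtain ⟨⟨x, hx, hpx, hxa⟩, y, hy, hpy, hya⟩ :
      (∃ x ∈ X, p.1 < x.1 ∧ x.1 < a.1) ∧ ∃ y ∈ Y, p.1 < y.1 ∧ y.1 < a.1 := by
    rcases Finset.mem_union.1 (h.subset_union hc) with hcX | hcY
    · obtain ⟨y, hy, hpy, hyc⟩ := h.exists_snd_between p hp c hcX hpc
      exact ⟨⟨c, hcX, hpc, hca⟩, y, hy, hpy, hyc.trans hca⟩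
    · obtain ⟨x, hx, hcx, hxa⟩ := h.exists_fst_between c hcY a ha hca
      exact ⟨⟨x, hx, hpc.trans hcx, hxa⟩, c, hcY, hpc, hca⟩
  have x_side : 0 < -(s * orientDet p a x) := by
    rw [← mul_neg, ← orientDet_swap_right]
    exact h.orientDet_fst p hp x hx hpx a ha
  have y_side : 0 < s * orientDet p a y := by
    rw [← neg_mul_neg, ← orientDet_swap_right, ← orientDet_rotate]
    exact h.orientDet_snd y hy a ha hya p hp
  obtain ⟨t, ht, hside⟩ := hone
  have x_same := hside x (h.fst_subset hx) (Set.mem_uIoo_of_lt hpx hxa)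
  have y_same := hside y (h.snd_subset hy) (Set.mem_uIoo_of_lt hpy hya)
  have opposite : (s * s) * (orientDet p a x * orientDet p a y) < 0 := by nlinarith
  have same : 0 ≤ (t * t) * (orientDet p a x * orientDet p a y) := by nlinarith
  exact (nonneg_of_mul_nonneg_right same (mul_self_pos.2 ht)).not_gt
    (neg_of_mul_neg_right opposite (mul_self_nonneg s))

lemma IsHortonSplit.notMem_uIoo_of_oneSided (h : IsHortonSplit H X Y s) (hp : p ∈ X) (ha : a ∈ Y)
    (hone : OneSided H p a) (hc : c ∈ H) : c.1 ∉ Set.uIoo p.1 a.1 := by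
  rcases le_total p.1 a.1 with hle | hle
  · rw [Set.uIoo_of_le hle]
    exact h.notMem_Ioo_of_oneSided hp ha hone hc
  · rw [Set.uIoo_of_ge hle]
    exact h.symm.notMem_Ioo_of_oneSided ha hp hone.symm hc

lemma card_filter_adjacent_le_two (hH : DistinctX ↑H) (hp : p ∈ H) :
    (H.filter fun a => a ≠ p ∧ ∀ c ∈ H, c.1 ∉ Set.uIoo p.1 a.1).card ≤ 2 := by
  rw [← Fintype.card_bool, ← Finset.card_univ]
  refine Finset.card_le_card_of_injOn (fun a => decide (p.1 < a.1)) (fun _ _ => Finset.mem_univ _)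
    fun a ha b hb hab => ?_
  simp only [Finset.coe_filter, Set.mem_ofPred_eq, decide_eq_decide] at ha hb hab
  obtain ⟨haH, hap, ha_adj⟩ := ha
  obtain ⟨hbH, hbp, hb_adj⟩ := hb
  by_contra hne
  have hb_notMem := ha_adj b hbH
  have ha_notMem := hb_adj a haH
  rcases (hH p hp a haH hap.symm).lt_or_gt with hpa | hap
  · have hpb := hab.1 hpa
    rw [Set.uIoo_of_lt ‹_›] at ha_notMem hb_notMem
    exact (hH a haH b hbH hne).lt_or_gt.elim (fun h => ha_notMem ⟨hpa, h⟩)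
      fun h => hb_notMem ⟨hpb, h⟩
  · have hbp := (hH b hbH p hp hbp).lt_or_gt.resolve_right fun hpb => hap.not_gt (hab.2 hpb)
    rw [Set.uIoo_of_gt ‹_›] at ha_notMem hb_notMem
    exact (hH a haH b hbH hne).lt_or_gt.elim (fun h => hb_notMem ⟨h, hbp⟩)
      fun h => ha_notMem ⟨h, hap⟩

/-- The points of `H` other than `p` that see `p` from one side in the sense of `OneSided`. -/
def oneSidedNeighbors (H : Finset (ℝ × ℝ)) (p : ℝ × ℝ) : Finset (ℝ × ℝ) :=
  H.filter fun a => a ≠ p ∧ OneSided H p a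

lemma mem_oneSidedNeighbors : a ∈ oneSidedNeighbors H p ↔ a ∈ H ∧ a ≠ p ∧ OneSided H p a :=
  Finset.mem_filter

lemma clog_two_add_one_le {k n : ℕ} (hn : 1 < n) (hk : k ≤ (n + 1) / 2) :
    Nat.clog 2 k + 1 ≤ Nat.clog 2 n := by
  rw [Nat.clog_of_two_le one_lt_two hn]
  exact Nat.succ_le_succ (Nat.clog_mono_right 2 hk)

lemma IsHortonSplit.card_oneSidedNeighbors_le (h : IsHortonSplit H X Y s) (hp : p ∈ X) :
    (oneSidedNeighbors H p).card ≤ (oneSidedNeighbors X p).card + 2 := by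
  refine (Finset.card_le_card fun a ha => ?_).trans ((Finset.card_union_le _ _).trans <|
    Nat.add_le_add_left (card_filter_adjacent_le_two h.distinctX (h.fst_subset hp)) _)
  obtain ⟨haH, hap, hone⟩ := mem_oneSidedNeighbors.1 ha
  rcases Finset.mem_union.1 (h.subset_union haH) with haX | haY
  · exact Finset.mem_union_left _ (mem_oneSidedNeighbors.2 ⟨haX, hap, hone.mono h.fst_subset⟩)
  · exact Finset.mem_union_right _ (Finset.mem_filter.2
      ⟨haH, hap, fun c hc => h.notMem_uIoo_of_oneSided hp haY hone hc⟩)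

lemma IsHorton.card_oneSidedNeighbors_le (hH : IsHorton H) :
    ∀ p ∈ H, (oneSidedNeighbors H p).card ≤ 2 * Nat.clog 2 H.card := by
  refine hH.induction_split (motive := fun H p => (oneSidedNeighbors H p).card ≤
    2 * Nat.clog 2 H.card) (fun H p hcard hp => ?_) fun H X Y s p hsplit _ _ hcard hp ih => ?_
  · have hsub : oneSidedNeighbors H p ⊆ H.erase p := fun a ha =>
      Finset.mem_erase.2 ⟨(mem_oneSidedNeighbors.1 ha).2.1, (mem_oneSidedNeighbors.1 ha).1⟩
    have hle := Finset.card_le_card hsub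
    rw [Finset.card_erase_of_mem hp] at hle
    rcases (show H.card ≤ 1 ∨ 1 < H.card by omega) with h1 | h1
    · omega
    · have := Nat.clog_pos one_lt_two h1
      omega
  · have := hsplit.card_oneSidedNeighbors_le hp
    have := clog_two_add_one_le (by omega) hsplit.card_fst_le
    omega

lemma IsHortonSplit.oneSided_of_empty (h : IsHortonSplit H X Y s) (ha : a ∈ X) (hb : b ∈ X)
    (hp : p ∈ Y) (hempty : ∀ c ∈ H, ¬ InTriangle a b p c) : OneSided X a b := by
  wlog hab : a.1 ≤ b.1 generalizing a b
  · exact (this hb ha (fun c hc => inTriangle_swap.not.2 (hempty c hc)) (le_of_not_ge hab)).symm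
  refine ⟨-s, neg_ne_zero.2 h.sign_ne_zero, fun c hc hcab => ?_⟩
  rw [Set.uIoo_of_le hab] at hcab
  by_contra! hneg
  refine hempty c (h.fst_subset hc) ⟨s, by linarith, ?_, ?_⟩
  · rw [← orientDet_rotate, ← orientDet_rotate]
    exact h.orientDet_fst c hc b hb hcab.2 p hp
  · rw [← orientDet_rotate]
    exact h.orientDet_fst a ha c hc hcab.1 p hp

end OneSided

section HortonEmptyPairs

variable {H X Y : Finset (ℝ × ℝ)} {p : ℝ × ℝ} {s : ℝ}

lemma IsHortonSplit.card_emptyPairs_fst_snd_le (h : IsHortonSplit H X Y s) (hX : IsHorton X)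
    (hp : p ∈ X) : ((emptyPairs id H p).filter fun ab => ab.1 ∈ X ∧ ab.2 ∈ Y).card ≤
      2 * (H.card * Nat.clog 2 H.card) := by
  have hsub : ((emptyPairs id H p).filter fun ab => ab.1 ∈ X ∧ ab.2 ∈ Y) ⊆
      oneSidedNeighbors X p ×ˢ Y := by
    rintro ⟨a, b⟩ hab
    obtain ⟨hempty, ha, hb⟩ := Finset.mem_filter.1 hab
    obtain ⟨⟨-, hap⟩, -, -, hempty⟩ := mem_emptyPairs.1 hempty
    exact Finset.mem_product.2
      ⟨mem_oneSidedNeighbors.2 ⟨ha, hap, h.oneSided_of_empty hp ha hb hempty⟩, hb⟩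
  calc _ ≤ (oneSidedNeighbors X p).card * Y.card :=
        (Finset.card_le_card hsub).trans_eq (Finset.card_product _ _)
    _ ≤ 2 * Nat.clog 2 H.card * H.card := by
        gcongr
        · exact (hX.card_oneSidedNeighbors_le p hp).trans
            (Nat.mul_le_mul_left 2 (Nat.clog_mono_right 2 (Finset.card_le_card h.fst_subset)))
        · exact h.snd_subset
    _ = 2 * (H.card * Nat.clog 2 H.card) := by ring

lemma IsHortonSplit.card_emptyPairs_snd_snd_le (h : IsHortonSplit H X Y s) (hY : IsHorton Y)
    (hp : p ∈ X) : ((emptyPairs id H p).filter fun ab => ab.1 ∈ Y ∧ ab.2 ∈ Y).card ≤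
      2 * (H.card * Nat.clog 2 H.card) := by
  calc _ ≤ Y.card * (2 * Nat.clog 2 H.card) := by
        refine card_le_mul_of_card_fiber_le (F := oneSidedNeighbors Y) ?_ fun a ha =>
          (hY.card_oneSidedNeighbors_le a ha).trans
            (Nat.mul_le_mul_left 2 (Nat.clog_mono_right 2 (Finset.card_le_card h.snd_subset)))
        rintro ⟨a, b⟩ hab
        obtain ⟨hempty, ha, hb⟩ := Finset.mem_filter.1 hab
        obtain ⟨-, -, hab, hempty⟩ := mem_emptyPairs.1 hempty
        exact ⟨ha, mem_oneSidedNeighbors.2 ⟨hb, hab.symm, h.symm.oneSided_of_empty ha hb hp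
          fun c hc => inTriangle_rotate.not.2 (hempty c hc)⟩⟩
    _ ≤ H.card * (2 * Nat.clog 2 H.card) :=
        Nat.mul_le_mul_right _ (Finset.card_le_card h.snd_subset)
    _ = 2 * (H.card * Nat.clog 2 H.card) := by ring

lemma IsHortonSplit.card_emptyPairs_le (h : IsHortonSplit H X Y s) (hX : IsHorton X)
    (hY : IsHorton Y) (hp : p ∈ X) :
    (emptyPairs id H p).card ≤ (emptyPairs id X p).card + 6 * (H.card * Nat.clog 2 H.card) := by
  let mixed := (emptyPairs id H p).filter fun ab => ab.1 ∈ X ∧ ab.2 ∈ Y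
  let far := (emptyPairs id H p).filter fun ab => ab.1 ∈ Y ∧ ab.2 ∈ Y
  have hcover : emptyPairs id H p ⊆ emptyPairs id X p ∪ (mixed ∪ mixed.image Prod.swap ∪ far) := by
    rintro ⟨a, b⟩ hab
    obtain ⟨⟨ha, hap⟩, ⟨hb, hbp⟩, hne, hempty⟩ := mem_emptyPairs.1 hab
    simp only [Finset.mem_union, mixed, far, Finset.mem_image, Finset.mem_filter]
    rcases Finset.mem_union.1 (h.subset_union ha) with haX | haY <;>
      rcases Finset.mem_union.1 (h.subset_union hb) with hbX | hbY
    · exact .inl (mem_emptyPairs.2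
        ⟨⟨haX, hap⟩, ⟨hbX, hbp⟩, hne, fun c hc => hempty c (h.fst_subset hc)⟩)
    · exact .inr (.inl (.inl ⟨hab, haX, hbY⟩))
    · exact .inr (.inl (.inr ⟨(b, a), ⟨emptyPairs_swap hab, hbX, haY⟩, rfl⟩))
    · exact .inr (.inr ⟨hab, haY, hbY⟩)
  have card_mixed : mixed.card ≤ _ := h.card_emptyPairs_fst_snd_le hX hp
  have card_far : far.card ≤ _ := h.card_emptyPairs_snd_snd_le hY hp
  have := Finset.card_le_card hcover
  have := Finset.card_union_le (emptyPairs id X p) (mixed ∪ mixed.image Prod.swap ∪ far)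
  have := Finset.card_union_le (mixed ∪ mixed.image Prod.swap) far
  have := Finset.card_union_le mixed (mixed.image Prod.swap)
  have := Finset.card_image_le (s := mixed) (f := Prod.swap)
  omega

theorem IsHorton.card_emptyPairs_le (hH : IsHorton H) :
    ∀ p ∈ H, (emptyPairs id H p).card ≤ 12 * (H.card * Nat.clog 2 H.card) := by
  refine hH.induction_split (motive := fun H p => (emptyPairs id H p).card ≤
    12 * (H.card * Nat.clog 2 H.card)) (fun H p hcard hp => ?_)
    fun H X Y s p hsplit hX hY hcard hp ih => ?_
  · suffices h : emptyPairs id H p = ∅ by simp [h]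
    refine Finset.eq_empty_of_forall_notMem ?_
    rintro ⟨a, b⟩ hab
    obtain ⟨⟨ha, hap⟩, ⟨hb, hbp⟩, hne, -⟩ := mem_emptyPairs.1 hab
    exact hcard.not_gt
      (Finset.two_lt_card.2 ⟨p, hp, a, ha, b, hb, hap.symm, hbp.symm, hne⟩)
  · have hstep := hsplit.card_emptyPairs_le hX hY hp
    have hhalf : 2 * X.card ≤ H.card + 1 := by have := hsplit.card_fst_le; omega
    have hclog := clog_two_add_one_le (by omega) hsplit.card_fst_le
    have hclog_le : Nat.clog 2 H.card ≤ H.card :=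
      Nat.clog_le_of_le_pow Nat.lt_two_pow_self.le
    nlinarith

end HortonEmptyPairs

section PrimitiveVectors

variable {R : Type*} [CommRing R] {p u v w d : R × R}

lemma exists_eq_smul_of_wedge_eq_zero (hw : IsCoprime w.1 w.2) (h : wedge w d = 0) :
    ∃ j : R, d = j • w := by
  obtain ⟨s, t, hst⟩ := hw
  unfold wedge at h
  refine ⟨s * d.1 + t * d.2, Prod.ext ?_ ?_⟩ <;> simp only [Prod.smul_fst, Prod.smul_snd,
    smul_eq_mul]
  · linear_combination -d.1 * hst - t * h
  · linear_combination -d.2 * hst + s * h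

lemma exists_wedge_eq_one (hu : IsCoprime u.1 u.2) : ∃ w, wedge u w = 1 := by
  obtain ⟨s, t, hst⟩ := hu
  exact ⟨(-t, s), by unfold wedge; linear_combination hst⟩

lemma isCoprime_of_wedge_eq_one (h : wedge u w = 1) : IsCoprime w.1 w.2 :=
  ⟨-u.2, u.1, by unfold wedge at h; linear_combination h⟩

lemma inTriangle_add_of_wedge_lt [LinearOrder R] [IsStrictOrderedRing R] {s t : R} (hs : 0 < s)
    (ht : 0 < t) (huw : 0 < wedge u w) (hwv : 0 < wedge w v)
    (hlt : s * wedge u w + t * wedge w v < s * t * wedge u v) :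
    InTriangle p (p + s • u) (p + t • v) (p + w) := by
  have hpa : orientDet p (p + s • u) (p + w) = s * wedge u w := by
    simp only [orientDet, add_sub_cancel_left, wedge_smul_left]
  have hbp : orientDet (p + t • v) p (p + w) = t * wedge w v := by
    rw [← orientDet_rotate]
    simp only [orientDet, add_sub_cancel_left, wedge_smul_right]
  have hpab : orientDet p (p + s • u) (p + t • v) = s * t * wedge u v := by
    rw [orientDet, add_sub_cancel_left, add_sub_cancel_left, wedge_smul_left, wedge_smul_right,
      mul_assoc]
  have hab : orientDet (p + s • u) (p + t • v) (p + w) =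
      s * t * wedge u v - (s * wedge u w + t * wedge w v) := by
    rw [← hpa, ← hbp, ← hpab, ← orientDet_add_add_eq p (p + s • u) (p + t • v) (p + w)]
    ring
  refine ⟨1, ?_, ?_, ?_⟩ <;> rw [one_mul]
  · exact hpa ▸ mul_pos hs huw
  · exact hab ▸ sub_pos.2 hlt
  · exact hbp ▸ mul_pos ht hwv

end PrimitiveVectors

section HollowTriangles

variable {p a b u v w d : ℤ × ℤ} {s t : ℤ}

lemma exists_eq_smul_primitive (hd : d ≠ 0) :
    ∃ t : ℤ, 0 < t ∧ ∃ u : ℤ × ℤ, IsCoprime u.1 u.2 ∧ d = t • u := by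
  have hgcd : 0 < Int.gcd d.1 d.2 := Nat.pos_of_ne_zero fun h0 =>
    hd (Prod.ext (Int.gcd_eq_zero_iff.1 h0).1 (Int.gcd_eq_zero_iff.1 h0).2)
  obtain ⟨x, y, hxy, hx, hy⟩ := Int.exists_gcd_one hgcd
  refine ⟨Int.gcd d.1 d.2, by exact_mod_cast hgcd, (x, y), Int.isCoprime_iff_gcd_eq_one.2 hxy,
    Prod.ext ?_ ?_⟩
  · rw [Prod.smul_fst, smul_eq_mul, mul_comm]; exact hx
  · rw [Prod.smul_snd, smul_eq_mul, mul_comm]; exact hy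

lemma exists_wedge_eq_one_wedge_lt (hu : IsCoprime u.1 u.2) (hv : IsCoprime v.1 v.2)
    (hD : 2 ≤ wedge u v) : ∃ w, wedge u w = 1 ∧ 0 < wedge w v ∧ wedge w v < wedge u v := by
  obtain ⟨w₀, hw₀⟩ := exists_wedge_eq_one hu
  let w := w₀ - (wedge w₀ v / wedge u v) • u
  have huw : wedge u w = 1 := by
    rw [wedge_swap, wedge_sub_left, wedge_smul_left, wedge_self, mul_zero, sub_zero, ← wedge_swap,
      hw₀]
  have hwv : wedge w v = wedge w₀ v % wedge u v := by
    rw [Int.emod_def, wedge_sub_left, wedge_smul_left, mul_comm (wedge u v)]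
  refine ⟨w, huw, ?_, hwv ▸ Int.emod_lt_of_pos _ (by omega)⟩
  refine lt_of_le_of_ne (hwv ▸ Int.emod_nonneg _ (by omega)) fun h0 => ?_
  obtain ⟨j, hj⟩ := exists_eq_smul_of_wedge_eq_zero (d := w) hv (by rw [wedge_swap, ← h0, neg_zero])
  have hunit : wedge u v * j = 1 := by rw [← huw, hj, wedge_smul_right, mul_comm]
  have := Int.eq_one_or_neg_one_of_mul_eq_one hunit
  omega

/-- The possible lattice heights of the vertices `a` and `b` of a lattice triangle `pab` without
interior lattice points, relative to the line through `p` in a suitable primitive direction. -/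
def hollowOffsets : Finset (ℤ × ℤ) :=
  {(0, 0), (0, 1), (1, 0), (0, 2), (2, 0), (0, -1), (-1, 0), (-1, -1)}

/-- The primitive vector `w` is parallel to a side of the triangle `pab`, and the heights of `a`
and `b` over the line through `p` in direction `w` are among the `hollowOffsets`. -/
def IsThinAlong (p a b w : ℤ × ℤ) : Prop :=
  IsCoprime w.1 w.2 ∧ (wedge w (a - p), wedge w (b - p)) ∈ hollowOffsets ∧
    ∃ x ∈ ({p, a, b} : Set (ℤ × ℤ)), ∃ y ∈ ({p, a, b} : Set (ℤ × ℤ)), ∃ t : ℤ, t ≠ 0 ∧ y - x = t • w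

lemma IsThinAlong.swap (h : IsThinAlong p a b w) : IsThinAlong p b a w := by
  obtain ⟨hw, hoff, x, hx, y, hy, ht⟩ := h
  refine ⟨hw, ?_, x, by rwa [Set.pair_comm], y, by rwa [Set.pair_comm], ht⟩
  simp only [hollowOffsets, Finset.mem_insert, Finset.mem_singleton, Prod.mk.injEq] at hoff ⊢
  omega

lemma isThinAlong_of_two_le_wedge (hu : IsCoprime u.1 u.2) (hv : IsCoprime v.1 v.2) (hs : 0 < s)
    (ht : 0 < t) (hD : 2 ≤ wedge u v)
    (hhollow : ∀ x, ¬ InTriangle p (p + s • u) (p + t • v) x) :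
    ∃ w, IsThinAlong p (p + s • u) (p + t • v) w := by
  obtain ⟨w, huw, hwv_pos, hwv_lt⟩ := exists_wedge_eq_one_wedge_lt hu hv hD
  have hle : s * t * wedge u v ≤ s * wedge u w + t * wedge w v := not_lt.1 fun hlt =>
    hhollow _ (inTriangle_add_of_wedge_lt hs ht (huw ▸ one_pos) hwv_pos hlt)
  rw [huw] at hle
  have hle' : (s - 1) * (t * wedge u v) + t ≤ s := by nlinarith
  have hD_le : 2 ≤ t * wedge u v := by nlinarith
  obtain rfl : s = 1 := by nlinarith
  obtain rfl : t = 1 := by nlinarith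
  have hwv : wedge w v = wedge u v - 1 := by omega
  have hwu : wedge (w - u) u = -1 := by rw [wedge_sub_left, wedge_self, wedge_swap, huw, sub_zero]
  have hdir : wedge u v • (w - u) = v - u := by
    rw [smul_sub, wedge_smul_eq_smul_add_smul, huw, hwv]
    module
  refine ⟨w - u, isCoprime_of_wedge_eq_one (u := u) (by rw [wedge_swap, hwu, neg_neg]), ?_,
    p + (1 : ℤ) • u, by simp, p + (1 : ℤ) • v, by simp, wedge u v, by omega, by rw [hdir]; module⟩
  rw [add_sub_cancel_left, add_sub_cancel_left, wedge_smul_right, wedge_smul_right, hwu,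
    wedge_sub_left, hwv, sub_sub_cancel_left]
  decide

lemma isThinAlong_of_wedge_eq_one (hu : IsCoprime u.1 u.2) (hv : IsCoprime v.1 v.2) (hs : 0 < s)
    (ht : 0 < t) (hD : wedge u v = 1) (hhollow : ∀ x, ¬ InTriangle p (p + s • u) (p + t • v) x) :
    ∃ w, IsThinAlong p (p + s • u) (p + t • v) w := by
  have hle : s * t ≤ s + t := not_lt.1 fun hlt => by
    have hu_add : wedge u (u + v) = 1 := by rw [wedge_add_right, wedge_self, zero_add, hD]
    have hadd_v : wedge (u + v) v = 1 := by rw [wedge_add_left, wedge_self, add_zero, hD]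
    refine hhollow _ (inTriangle_add_of_wedge_lt (w := u + v) hs ht ?_ ?_ ?_)
    · exact hu_add ▸ one_pos
    · exact hadd_v ▸ one_pos
    · rwa [hu_add, hadd_v, hD, mul_one, mul_one, mul_one]
  obtain rfl | rfl | ⟨rfl, rfl⟩ : s = 1 ∨ t = 1 ∨ (s = 2 ∧ t = 2) := by
    by_contra! hne
    have hs2 : 2 ≤ s := by omega
    have ht2 : 2 ≤ t := by omega
    rcases eq_or_ne s 2 with rfl | hs3
    · have := hne.2.2 rfl
      omega
    · nlinarith [show 3 ≤ s by omega]
  · refine ⟨v, hv, ?_, p, by simp, p + t • v, by simp, t, ht.ne', add_sub_cancel_left _ _⟩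
    rw [add_sub_cancel_left, add_sub_cancel_left, one_smul, wedge_smul_right, wedge_self,
      wedge_swap, hD, mul_zero]
    decide
  · refine ⟨u, hu, ?_, p, by simp, p + s • u, by simp, s, hs.ne', add_sub_cancel_left _ _⟩
    rw [add_sub_cancel_left, add_sub_cancel_left, one_smul, wedge_smul_right, wedge_self, hD,
      mul_zero]
    decide
  · refine ⟨u, hu, ?_, p, by simp, p + (2 : ℤ) • u, by simp, 2, two_ne_zero,
      add_sub_cancel_left _ _⟩
    rw [add_sub_cancel_left, add_sub_cancel_left, wedge_smul_right, wedge_smul_right, wedge_self,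
      hD]
    decide

lemma exists_isThinAlong_of_smul (hu : IsCoprime u.1 u.2) (hv : IsCoprime v.1 v.2) (hs : 0 < s)
    (ht : 0 < t) (hD : 0 < wedge u v) (hhollow : ∀ x, ¬ InTriangle p (p + s • u) (p + t • v) x) :
    ∃ w, IsThinAlong p (p + s • u) (p + t • v) w := by
  rcases (show wedge u v = 1 ∨ 2 ≤ wedge u v by omega) with hD | hD
  · exact isThinAlong_of_wedge_eq_one hu hv hs ht hD hhollow
  · exact isThinAlong_of_two_le_wedge hu hv hs ht hD hhollow

theorem exists_isThinAlong (ha : a ≠ p) (hb : b ≠ p) (hhollow : ∀ x, ¬ InTriangle p a b x) :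
    ∃ w, IsThinAlong p a b w := by
  obtain ⟨s, hs, u, hu, hsu⟩ := exists_eq_smul_primitive (sub_ne_zero.2 ha)
  obtain ⟨t, ht, v, hv, htv⟩ := exists_eq_smul_primitive (sub_ne_zero.2 hb)
  obtain rfl : a = p + s • u := by rw [← hsu, add_sub_cancel]
  obtain rfl : b = p + t • v := by rw [← htv, add_sub_cancel]
  rcases lt_trichotomy (wedge u v) 0 with hD | hD | hD
  · rw [wedge_swap, neg_lt_zero] at hD
    exact (exists_isThinAlong_of_smul hv hu ht hs hD
      fun x => inTriangle_swap_right.not.2 (hhollow x)).imp fun _ => IsThinAlong.swap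
  · obtain ⟨j, rfl⟩ := exists_eq_smul_of_wedge_eq_zero hu hD
    refine ⟨u, hu, ?_, p, by simp, p + s • u, by simp, s, hs.ne', add_sub_cancel_left _ _⟩
    rw [add_sub_cancel_left, add_sub_cancel_left, smul_smul, wedge_smul_right, wedge_smul_right,
      wedge_self, mul_zero, mul_zero]
    decide
  · exact exists_isThinAlong_of_smul hu hv hs ht hD hhollow

end HollowTriangles

section LatticeGrid

variable {m : ℕ} {w x y a b c : ℤ × ℤ} {σ : ℤ}

/-- The grid `{1, …, m} × {1, …, m}` inside the integer lattice. -/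
def latticeGrid (m : ℕ) : Finset (ℤ × ℤ) := Finset.Icc 1 (m : ℤ) ×ˢ Finset.Icc 1 (m : ℤ)

/-- The lattice point `x` as a point of the real plane. -/
def latticePoint (x : ℤ × ℤ) : ℝ × ℝ := (x.1, x.2)

/-- The grid points `x` on the lattice line `wedge w x = σ` of direction `w`. -/
def latticeLine (m : ℕ) (w : ℤ × ℤ) (σ : ℤ) : Finset (ℤ × ℤ) :=
  (latticeGrid m).filter fun x => wedge w x = σ

lemma mem_latticeGrid : x ∈ latticeGrid m ↔ (1 ≤ x.1 ∧ x.1 ≤ m) ∧ (1 ≤ x.2 ∧ x.2 ≤ m) := by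
  simp only [latticeGrid, Finset.mem_product, Finset.mem_Icc]

lemma mem_latticeLine : x ∈ latticeLine m w σ ↔ x ∈ latticeGrid m ∧ wedge w x = σ := by
  simp only [latticeLine, Finset.mem_filter]

lemma mem_latticeGrid_of_mem_latticeLine (hx : x ∈ latticeLine m w σ) : x ∈ latticeGrid m :=
  (mem_latticeLine.1 hx).1

lemma exists_eq_add_smul_of_mem_latticeLine (hw : IsCoprime w.1 w.2) (hx : x ∈ latticeLine m w σ)
    (hy : y ∈ latticeLine m w σ) : ∃ j : ℤ, y = x + j • w := by
  obtain ⟨j, hj⟩ := exists_eq_smul_of_wedge_eq_zero (d := y - x) hw (by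
    rw [wedge_sub_right, (mem_latticeLine.1 hx).2, (mem_latticeLine.1 hy).2, sub_self])
  exact ⟨j, by rw [← hj, add_sub_cancel]⟩

lemma latticePoint_injective : Function.Injective latticePoint := fun x y h => by
  simpa [latticePoint, Prod.ext_iff] using h

lemma orientDet_latticePoint (a b c : ℤ × ℤ) :
    orientDet (latticePoint a) (latticePoint b) (latticePoint c) = orientDet a b c := by
  simp only [orientDet, wedge, latticePoint, Prod.fst_sub, Prod.snd_sub]
  push_cast
  rfl

lemma grid_eq_image_latticeGrid (m : ℕ) : grid m = (latticeGrid m).image latticePoint := by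
  ext x
  simp only [grid, Finset.mem_image, Finset.mem_product, Finset.mem_Icc, mem_latticeGrid]
  constructor
  · rintro ⟨⟨i, j⟩, hij, rfl⟩
    refine ⟨(i, j), ?_, by simp [latticePoint]⟩
    dsimp only at hij ⊢
    omega
  · rintro ⟨⟨i, j⟩, hij, rfl⟩
    dsimp only at hij
    lift i to ℕ using by omega
    lift j to ℕ using by omega
    exact ⟨(i, j), by dsimp only; omega, by simp [latticePoint]⟩

lemma latticePoint_mem_grid (hx : x ∈ latticeGrid m) : latticePoint x ∈ grid m :=
  grid_eq_image_latticeGrid m ▸ Finset.mem_image_of_mem _ hx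

lemma mem_latticeGrid_of_inTriangle (ha : a ∈ latticeGrid m) (hb : b ∈ latticeGrid m)
    (hc : c ∈ latticeGrid m) (h : InTriangle a b c x) : x ∈ latticeGrid m := by
  have mem_iff {y : ℤ × ℤ} :
      y ∈ latticeGrid m ↔ latticePoint y ∈ Set.Icc ((1 : ℝ), (1 : ℝ)) (m, m) := by
    simp only [mem_latticeGrid, latticePoint, Set.mem_Icc, Prod.mk_le_mk]
    norm_cast
    tauto
  have h_real : InTriangle (latticePoint a) (latticePoint b) (latticePoint c) (latticePoint x) := by
    obtain ⟨s, hs⟩ := h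
    refine ⟨s, ?_⟩
    simp only [orientDet_latticePoint]
    exact_mod_cast hs
  refine mem_iff.2 (convexHull_min ?_ (convex_Icc _ _) h_real.mem_convexHull)
  simp only [Set.insert_subset_iff, Set.singleton_subset_iff]
  exact ⟨mem_iff.1 ha, mem_iff.1 hb, mem_iff.1 hc⟩

lemma collinear_iff_orientDet_eq_zero {a b x : ℝ × ℝ} (hab : a ≠ b) :
    Collinear ℝ {a, b, x} ↔ orientDet a b x = 0 := by
  rw [collinear_iff_of_mem (p₀ := a) (Set.mem_insert a _)]
  constructor
  · rintro ⟨v, hv⟩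
    obtain ⟨r, hr⟩ := hv b (by simp)
    obtain ⟨s, hs⟩ := hv x (by simp)
    rw [orientDet, hr, hs, vadd_eq_add, vadd_eq_add, add_sub_cancel_right, add_sub_cancel_right,
      wedge_smul_left, wedge_smul_right, wedge_self, mul_zero, mul_zero]
  · intro h
    have hdir : IsCoprime (b - a).1 (b - a).2 := by
      rw [Semifield.isCoprime_iff, ← not_and_or]
      exact fun h0 => hab (sub_eq_zero.1 (Prod.ext h0.1 h0.2)).symm
    obtain ⟨r, hr⟩ := exists_eq_smul_of_wedge_eq_zero hdir h
    refine ⟨b - a, ?_⟩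
    rintro y (rfl | rfl | rfl)
    · exact ⟨0, by simp⟩
    · exact ⟨1, by simp⟩
    · exact ⟨r, by rw [← hr, vadd_eq_add, sub_add_cancel]⟩

lemma gridLine_latticePoint (hw : IsCoprime w.1 w.2) (ha : a ∈ latticeLine m w σ)
    (hb : b ∈ latticeLine m w σ) (hab : a ≠ b) :
    gridLine m (latticePoint a) (latticePoint b) = (latticeLine m w σ).image latticePoint := by
  obtain ⟨j, rfl⟩ := exists_eq_add_smul_of_mem_latticeLine hw ha hb
  have hj : j ≠ 0 := by
    rintro rfl
    simp at hab
  have collinear_iff (x : ℤ × ℤ) :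
      Collinear ℝ {latticePoint a, latticePoint (a + j • w), latticePoint x} ↔ wedge w x = σ := by
    rw [collinear_iff_orientDet_eq_zero (latticePoint_injective.ne hab), orientDet_latticePoint,
      Int.cast_eq_zero, orientDet, add_sub_cancel_left, wedge_smul_left, wedge_sub_right,
      (mem_latticeLine.1 ha).2, mul_eq_zero, or_iff_right hj, sub_eq_zero]
  ext y
  rw [gridLine, Finset.mem_filter, grid_eq_image_latticeGrid, Finset.mem_image, Finset.mem_image]
  constructor
  · rintro ⟨⟨x, hx, rfl⟩, hcol⟩
    exact ⟨x, mem_latticeLine.2 ⟨hx, (collinear_iff x).1 hcol⟩, rfl⟩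
  · rintro ⟨x, hx, rfl⟩
    obtain ⟨hx, hxσ⟩ := mem_latticeLine.1 hx
    exact ⟨⟨x, hx, rfl⟩, (collinear_iff x).2 hxσ⟩

end LatticeGrid

section HortonCharts

variable {m : ℕ} {g k : ℤ × ℤ → ℝ × ℝ} {w x : ℤ × ℤ} {σ : ℤ} {L : Finset (ℤ × ℤ)}

/-- `g` maps positively oriented triples of points of `S` to positively oriented triples. -/
def PreservesOrientationOn (g : ℤ × ℤ → ℝ × ℝ) (S : Finset (ℤ × ℤ)) : Prop :=
  ∀ a ∈ S, ∀ b ∈ S, ∀ c ∈ S, 0 < orientDet a b c → 0 < orientDet (g a) (g b) (g c)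

/-- `k` places the points of a line `L` of direction `w` as a Horton set, in their order along the
line and with the same orientations as `g`. It is `g` itself unless `L` is vertical, when it is
`g` followed by a rotation. -/
structure IsHortonChart (g : ℤ × ℤ → ℝ × ℝ) (w : ℤ × ℤ) (L : Finset (ℤ × ℤ))
    (k : ℤ × ℤ → ℝ × ℝ) : Prop where
  orientDet_eq : ∀ a b c, orientDet (k a) (k b) (k c) = orientDet (g a) (g b) (g c)
  monotone : ∀ x, StrictMonoOn (fun i : ℤ => (k (x + i • w)).1) {i | x + i • w ∈ L} ∨
    StrictAntiOn (fun i : ℤ => (k (x + i • w)).1) {i | x + i • w ∈ L}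
  isHorton_image : IsHorton (L.image k)

/-- `g` preserves orientations on the `m × m` grid and all grid lines have Horton charts: what
the counting argument uses of a squared Horton set. -/
structure HasHortonLines (m : ℕ) (g : ℤ × ℤ → ℝ × ℝ) : Prop where
  preserves : PreservesOrientationOn g (latticeGrid m)
  exists_chart : ∀ (w : ℤ × ℤ) (σ : ℤ), IsCoprime w.1 w.2 →
    ∃ k, IsHortonChart g w (latticeLine m w σ) k

lemma PreservesOrientationOn.mul_pos {S : Finset (ℤ × ℤ)} (hg : PreservesOrientationOn g S)
    {a b c : ℤ × ℤ} (ha : a ∈ S) (hb : b ∈ S) (hc : c ∈ S) {s : ℤ} (h : 0 < s * orientDet a b c) :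
    0 < (s : ℝ) * orientDet (g a) (g b) (g c) := by
  rcases pos_and_pos_or_neg_and_neg_of_mul_pos h with ⟨hs, hD⟩ | ⟨hs, hD⟩
  · exact _root_.mul_pos (Int.cast_pos.2 hs) (hg a ha b hb c hc hD)
  · refine mul_pos_of_neg_of_neg (Int.cast_lt_zero.2 hs) ?_
    rw [← neg_pos, ← orientDet_swap] at hD ⊢
    exact hg b hb a ha c hc hD

lemma PreservesOrientationOn.inTriangle {S : Finset (ℤ × ℤ)} (hg : PreservesOrientationOn g S)
    {a b c x : ℤ × ℤ} (ha : a ∈ S) (hb : b ∈ S) (hc : c ∈ S) (hx : x ∈ S)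
    (h : InTriangle a b c x) : InTriangle (g a) (g b) (g c) (g x) :=
  let ⟨s, hab, hbc, hca⟩ := h
  ⟨s, hg.mul_pos ha hb hx hab, hg.mul_pos hb hc hx hbc, hg.mul_pos hc ha hx hca⟩

lemma IsHortonChart.mem_uIoo (hk : IsHortonChart g w L k) {i j : ℤ} (hx : x ∈ L)
    (hi : x + i • w ∈ L) (hj : x + j • w ∈ L)
    (h : (k (x + i • w)).1 ∈ Set.uIoo (k x).1 (k (x + j • w)).1) : i ∈ Set.uIoo 0 j := by
  have h0 : x + (0 : ℤ) • w ∈ L := by simpa using hx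
  replace h : (k (x + i • w)).1 ∈ Set.uIoo (k (x + (0 : ℤ) • w)).1 (k (x + j • w)).1 := by
    simpa using h
  simp only [Set.uIoo, Set.mem_Ioo, inf_lt_iff, lt_sup_iff] at h ⊢
  rcases hk.monotone x with hmono | hanti
  · rwa [hmono.lt_iff_lt h0 hi, hmono.lt_iff_lt hj hi, hmono.lt_iff_lt hi h0,
      hmono.lt_iff_lt hi hj] at h
  · rw [hanti.lt_iff_gt h0 hi, hanti.lt_iff_gt hj hi, hanti.lt_iff_gt hi h0,
      hanti.lt_iff_gt hi hj] at h
    exact h.symm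

lemma IsHortonChart.injOn (hw : IsCoprime w.1 w.2) (hk : IsHortonChart g w (latticeLine m w σ) k) :
    Set.InjOn k (latticeLine m w σ) := by
  intro x hx y hy hxy
  obtain ⟨j, rfl⟩ := exists_eq_add_smul_of_mem_latticeLine hw hx hy
  have h0 : x + (0 : ℤ) • w ∈ latticeLine m w σ := by simpa using hx
  have hinj : Set.InjOn (fun i : ℤ => (k (x + i • w)).1) {i | x + i • w ∈ latticeLine m w σ} :=
    (hk.monotone x).elim StrictMonoOn.injOn StrictAntiOn.injOn
  rw [← hinj h0 hy (by simpa using congrArg Prod.fst hxy), zero_smul, add_zero]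

end HortonCharts

section SquaredHorton

variable {m : ℕ} {ε : ℝ} {f : ℝ × ℝ → ℝ × ℝ} {w a b : ℤ × ℤ} {σ : ℤ}

lemma abs_fst_sub_le_elen (p q : ℝ × ℝ) : |p.1 - q.1| ≤ elen p q :=
  Real.abs_le_sqrt (le_add_of_nonneg_right (sq_nonneg _))

lemma abs_snd_sub_le_elen (p q : ℝ × ℝ) : |p.2 - q.2| ≤ elen p q :=
  Real.abs_le_sqrt (le_add_of_nonneg_left (sq_nonneg _))

lemma IsSquaredHorton.fst_lt_fst (h : IsSquaredHorton m ε f) (ha : a ∈ latticeGrid m)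
    (hb : b ∈ latticeGrid m) (hab : a.1 < b.1) :
    (f (latticePoint a)).1 < (f (latticePoint b)).1 := by
  have hfa := (abs_fst_sub_le_elen _ _).trans (h.close _ (latticePoint_mem_grid ha))
  have hfb := (abs_fst_sub_le_elen _ _).trans (h.close _ (latticePoint_mem_grid hb))
  have hab' : (latticePoint a).1 + 1 ≤ (latticePoint b).1 := by
    dsimp only [latticePoint]
    exact_mod_cast hab
  linarith [(abs_le.1 hfa).2, (abs_le.1 hfb).1, h.eps_lt]

lemma IsSquaredHorton.snd_lt_snd (h : IsSquaredHorton m ε f) (ha : a ∈ latticeGrid m)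
    (hb : b ∈ latticeGrid m) (hab : a.2 < b.2) :
    (f (latticePoint a)).2 < (f (latticePoint b)).2 := by
  have hfa := (abs_snd_sub_le_elen _ _).trans (h.close _ (latticePoint_mem_grid ha))
  have hfb := (abs_snd_sub_le_elen _ _).trans (h.close _ (latticePoint_mem_grid hb))
  have hab' : (latticePoint a).2 + 1 ≤ (latticePoint b).2 := by
    dsimp only [latticePoint]
    exact_mod_cast hab
  linarith [(abs_le.1 hfa).2, (abs_le.1 hfb).1, h.eps_lt]

lemma IsSquaredHorton.preservesOrientationOn (h : IsSquaredHorton m ε f) :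
    PreservesOrientationOn (f ∘ latticePoint) (latticeGrid m) := by
  intro a ha b hb c hc hD
  have hD' : 0 < orientDet (latticePoint a) (latticePoint b) (latticePoint c) := by
    rw [orientDet_latticePoint]
    exact_mod_cast hD
  exact (h.orient_iff _ (latticePoint_mem_grid ha) _ (latticePoint_mem_grid hb) _
    (latticePoint_mem_grid hc) hD'.ne').1 hD'

lemma strictMonoOn_or_strictAntiOn_add_smul {L : Finset (ℤ × ℤ)} {k : ℤ × ℤ → ℝ}
    {φ : ℤ × ℤ →+ ℤ} (hk : ∀ a ∈ L, ∀ b ∈ L, φ a < φ b → k a < k b) (hw : φ w ≠ 0) (x : ℤ × ℤ) :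
    StrictMonoOn (fun i : ℤ => k (x + i • w)) {i | x + i • w ∈ L} ∨
      StrictAntiOn (fun i : ℤ => k (x + i • w)) {i | x + i • w ∈ L} := by
  have map_add_smul (i : ℤ) : φ (x + i • w) = φ x + i * φ w := by
    rw [map_add, map_zsmul, smul_eq_mul]
  rcases hw.lt_or_gt with hneg | hpos
  · refine .inr fun i hi j hj hij => hk _ hj _ hi ?_
    rw [map_add_smul, map_add_smul]
    exact (add_lt_add_iff_left _).2 (mul_lt_mul_of_neg_right hij hneg)
  · refine .inl fun i hi j hj hij => hk _ hi _ hj ?_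
    rw [map_add_smul, map_add_smul]
    exact (add_lt_add_iff_left _).2 (mul_lt_mul_of_pos_right hij hpos)

lemma isHorton_of_card_le_one {H : Finset (ℝ × ℝ)} (h : H.card ≤ 1) : IsHorton H :=
  have heq := Finset.card_le_one.1 h
  .small H (fun a ha b hb _ _ hab => absurd (heq a ha b hb) hab)
    (fun a ha b hb hab => absurd (heq a ha b hb) hab) (h.trans one_le_two)

lemma isHorton_image_of_ne {ι : Type*} {L : Finset ι} {k : ι → ℝ × ℝ}
    (h : ∀ a ∈ L, ∀ b ∈ L, a ≠ b → IsHorton (L.image k)) : IsHorton (L.image k) := by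
  by_cases hL : L.card ≤ 1
  · exact isHorton_of_card_le_one (Finset.card_image_le.trans hL)
  · obtain ⟨a, ha, b, hb, hab⟩ := Finset.one_lt_card.1 (not_le.1 hL)
    exact h a ha b hb hab

lemma IsSquaredHorton.isHortonChart_of_fst_ne_zero (h : IsSquaredHorton m ε f)
    (hw : IsCoprime w.1 w.2) (hw1 : w.1 ≠ 0) :
    IsHortonChart (f ∘ latticePoint) w (latticeLine m w σ) (f ∘ latticePoint) where
  orientDet_eq _ _ _ := rfl
  monotone := strictMonoOn_or_strictAntiOn_add_smul (φ := AddMonoidHom.fst ℤ ℤ)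
    (fun _ ha _ hb => h.fst_lt_fst (mem_latticeGrid_of_mem_latticeLine ha)
      (mem_latticeGrid_of_mem_latticeLine hb)) hw1
  isHorton_image := isHorton_image_of_ne fun a ha b hb hab => by
    rw [← Finset.image_image, ← gridLine_latticePoint hw ha hb hab]
    refine h.nonvertical _ (latticePoint_mem_grid (mem_latticeGrid_of_mem_latticeLine ha)) _
      (latticePoint_mem_grid (mem_latticeGrid_of_mem_latticeLine hb))
      (latticePoint_injective.ne hab) ?_
    obtain ⟨j, rfl⟩ := exists_eq_add_smul_of_mem_latticeLine hw ha hb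
    have hj : j ≠ 0 := by
      rintro rfl
      simp at hab
    simp [latticePoint, hj, hw1]

lemma IsSquaredHorton.isHortonChart_of_fst_eq_zero (h : IsSquaredHorton m ε f)
    (hw : IsCoprime w.1 w.2) (hw1 : w.1 = 0) :
    IsHortonChart (f ∘ latticePoint) w (latticeLine m w σ) (rotCW ∘ f ∘ latticePoint) where
  orientDet_eq _ _ _ := by
    simp only [orientDet, wedge, rotCW, Function.comp_apply, Prod.fst_sub, Prod.snd_sub]
    ring
  monotone := strictMonoOn_or_strictAntiOn_add_smul (φ := AddMonoidHom.snd ℤ ℤ)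
    (fun _ ha _ hb => h.snd_lt_snd (mem_latticeGrid_of_mem_latticeLine ha)
      (mem_latticeGrid_of_mem_latticeLine hb))
    fun hw2 => not_isCoprime_zero_zero (hw1 ▸ (show w.2 = 0 from hw2) ▸ hw)
  isHorton_image := isHorton_image_of_ne fun a ha b hb hab => by
    rw [← Finset.image_image, ← Finset.image_image, ← gridLine_latticePoint hw ha hb hab]
    refine h.vertical _ (latticePoint_mem_grid (mem_latticeGrid_of_mem_latticeLine ha)) _
      (latticePoint_mem_grid (mem_latticeGrid_of_mem_latticeLine hb))
      (latticePoint_injective.ne hab) ?_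
    obtain ⟨j, rfl⟩ := exists_eq_add_smul_of_mem_latticeLine hw ha hb
    simp [latticePoint, hw1]

lemma IsSquaredHorton.hasHortonLines (h : IsSquaredHorton m ε f) :
    HasHortonLines m (f ∘ latticePoint) where
  preserves := h.preservesOrientationOn
  exists_chart w σ hw := by
    by_cases hw1 : w.1 = 0
    · exact ⟨_, h.isHortonChart_of_fst_eq_zero hw hw1⟩
    · exact ⟨_, h.isHortonChart_of_fst_ne_zero hw hw1⟩

end SquaredHorton

section StripPairs

variable {m K : ℕ} {g k : ℤ × ℤ → ℝ × ℝ} {p w x y z a b : ℤ × ℤ} {σ τ : ℤ}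

lemma IsHortonChart.oneSided_of_empty (hw : IsCoprime w.1 w.2)
    (hk : IsHortonChart g w (latticeLine m w σ) k) (hg : PreservesOrientationOn g (latticeGrid m))
    (hx : x ∈ latticeLine m w σ) (hy : y ∈ latticeLine m w σ) (hyx : y ≠ x)
    (hz : z ∈ latticeGrid m) (hzσ : wedge w z ≠ σ)
    (hempty : ∀ c ∈ latticeGrid m, ¬ InTriangle (g x) (g y) (g z) (g c)) :
    OneSided ((latticeLine m w σ).image k) (k x) (k y) := by
  obtain ⟨t, rfl⟩ := exists_eq_add_smul_of_mem_latticeLine hw hx hy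
  have ht : t ≠ 0 := by
    rintro rfl
    simp at hyx
  have hζ : wedge w z - σ ≠ 0 := sub_ne_zero.2 hzσ
  set ζ := wedge w z - σ
  refine ⟨-((t * ζ : ℤ) : ℝ), neg_ne_zero.2 (Int.cast_ne_zero.2 (mul_ne_zero ht hζ)), ?_⟩
  refine Finset.forall_mem_image.2 fun c hc hbetween => not_lt.1 fun hneg => ?_
  obtain ⟨i, rfl⟩ := exists_eq_add_smul_of_mem_latticeLine hw hx hc
  have hi := hk.mem_uIoo hx hc hy hbetween
  have hzxc : orientDet z x (x + i • w) = i * ζ := by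
    rw [← orientDet_rotate, orientDet, add_sub_cancel_left, wedge_smul_left, wedge_sub_right,
      (mem_latticeLine.1 hx).2]
  have hyzc : orientDet (x + t • w) z (x + i • w) = (t - i) * ζ := by
    rw [← orientDet_rotate, ← orientDet_rotate, orientDet, add_sub_add_left_eq_sub, ← sub_smul,
      wedge_smul_left, wedge_sub_right, (mem_latticeLine.1 hc).2]
  have hti : 0 < t * i ∧ 0 < t * (t - i) := by
    rcases ht.lt_or_gt with hneg | hpos
    · rw [Set.uIoo_of_gt hneg, Set.mem_Ioo] at hi
      exact ⟨mul_pos_of_neg_of_neg hneg hi.2, mul_pos_of_neg_of_neg hneg (sub_neg.2 hi.1)⟩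
    · rw [Set.uIoo_of_lt hpos, Set.mem_Ioo] at hi
      exact ⟨mul_pos hpos hi.1, mul_pos hpos (sub_pos.2 hi.2)⟩
  have hx' := mem_latticeGrid_of_mem_latticeLine hx
  have hy' := mem_latticeGrid_of_mem_latticeLine hy
  have hc' := mem_latticeGrid_of_mem_latticeLine hc
  refine hempty _ hc' ⟨_, ?_, hg.mul_pos hy' hz hc' (s := t * ζ) ?_, hg.mul_pos hz hx' hc' ?_⟩
  · rwa [hk.orientDet_eq, neg_mul, neg_lt_zero] at hneg
  · rw [hyzc, mul_mul_mul_comm]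
    exact mul_pos hti.2 (mul_self_pos.2 hζ)
  · rw [hzxc, mul_mul_mul_comm]
    exact mul_pos hti.1 (mul_self_pos.2 hζ)

/-- The grid points `y` on the line through `x` in direction `w` such that `xy` is a side of an
empty triangle whose third vertex is off this line. -/
def baseNeighbors (g : ℤ × ℤ → ℝ × ℝ) (m : ℕ) (w x : ℤ × ℤ) : Finset (ℤ × ℤ) :=
  (latticeLine m w (wedge w x)).filter fun y => y ≠ x ∧ ∃ z ∈ latticeGrid m,
    wedge w z ≠ wedge w x ∧ ∀ c ∈ latticeGrid m, ¬ InTriangle (g x) (g y) (g z) (g c)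

lemma mem_baseNeighbors : y ∈ baseNeighbors g m w x ↔ y ∈ latticeLine m w (wedge w x) ∧ y ≠ x ∧
    ∃ z ∈ latticeGrid m, wedge w z ≠ wedge w x ∧
      ∀ c ∈ latticeGrid m, ¬ InTriangle (g x) (g y) (g z) (g c) := by
  simp only [baseNeighbors, Finset.mem_filter]

/-- The pairs `(a, b)` spanning an empty triangle with `p`, where `a` and `b` lie on the lines of
direction `w` given by `σ` and `τ`. -/
def stripPairs (g : ℤ × ℤ → ℝ × ℝ) (m : ℕ) (p w : ℤ × ℤ) (σ τ : ℤ) :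
    Finset ((ℤ × ℤ) × (ℤ × ℤ)) :=
  (emptyPairs g (latticeGrid m) p).filter fun ab => wedge w ab.1 = σ ∧ wedge w ab.2 = τ

lemma mem_stripPairs : (a, b) ∈ stripPairs g m p w σ τ ↔
    (a, b) ∈ emptyPairs g (latticeGrid m) p ∧ wedge w a = σ ∧ wedge w b = τ := by
  simp only [stripPairs, Finset.mem_filter]

lemma card_stripPairs_swap_le :
    (stripPairs g m p w σ τ).card ≤ (stripPairs g m p w τ σ).card := by
  refine Finset.card_le_card_of_injOn Prod.swap ?_ Prod.swap_injective.injOn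
  rintro ⟨a, b⟩ hab
  obtain ⟨hab, ha, hb⟩ := mem_stripPairs.1 hab
  exact mem_stripPairs.2 ⟨emptyPairs_swap hab, hb, ha⟩

variable (hg : HasHortonLines m g) (hw : IsCoprime w.1 w.2) (hp : p ∈ latticeGrid m)
  (hK : ∀ σ, (latticeLine m w σ).card ≤ K)
include hg hw hK

lemma card_baseNeighbors_le (hx : x ∈ latticeGrid m) :
    (baseNeighbors g m w x).card ≤ 2 * Nat.clog 2 K := by
  obtain ⟨k, hk⟩ := hg.exists_chart w (wedge w x) hw
  set L := latticeLine m w (wedge w x)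
  have hxL : x ∈ L := mem_latticeLine.2 ⟨hx, rfl⟩
  calc (baseNeighbors g m w x).card ≤ (oneSidedNeighbors (L.image k) (k x)).card := by
        refine Finset.card_le_card_of_injOn k (fun y hy => ?_)
          ((hk.injOn hw).mono fun y hy => (mem_baseNeighbors.1 hy).1)
        obtain ⟨hyL, hyx, z, hz, hzL, hempty⟩ := mem_baseNeighbors.1 hy
        exact mem_oneSidedNeighbors.2 ⟨Finset.mem_image_of_mem k hyL,
          (hk.injOn hw).ne hyL hxL hyx,
          hk.oneSided_of_empty hw hg.preserves hxL hyL hyx hz hzL hempty⟩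
    _ ≤ 2 * Nat.clog 2 (L.image k).card :=
        hk.isHorton_image.card_oneSidedNeighbors_le _ (Finset.mem_image_of_mem k hxL)
    _ ≤ 2 * Nat.clog 2 K := by
        gcongr
        exact Finset.card_image_le.trans (hK _)

include hp

lemma card_stripPairs_self_le :
    (stripPairs g m p w (wedge w p) (wedge w p)).card ≤ 12 * (K * Nat.clog 2 K) := by
  obtain ⟨k, hk⟩ := hg.exists_chart w (wedge w p) hw
  set L := latticeLine m w (wedge w p)
  have hpL : p ∈ L := mem_latticeLine.2 ⟨hp, rfl⟩
  have hsub : stripPairs g m p w (wedge w p) (wedge w p) ⊆ emptyPairs k L p := by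
    rintro ⟨a, b⟩ hab
    obtain ⟨hab, haL, hbL⟩ := mem_stripPairs.1 hab
    obtain ⟨⟨ha, hap⟩, ⟨hb, hbp⟩, hne, hempty⟩ := mem_emptyPairs.1 hab
    refine mem_emptyPairs.2 ⟨⟨mem_latticeLine.2 ⟨ha, haL⟩, hap⟩, ⟨mem_latticeLine.2 ⟨hb, hbL⟩, hbp⟩,
      hne, fun c hc => ?_⟩
    simpa only [InTriangle, hk.orientDet_eq] using hempty c (mem_latticeGrid_of_mem_latticeLine hc)
  have hcard : (L.image k).card ≤ K := Finset.card_image_le.trans (hK _)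
  calc (stripPairs g m p w (wedge w p) (wedge w p)).card
      ≤ (emptyPairs id (L.image k) (k p)).card :=
        (Finset.card_le_card hsub).trans (card_emptyPairs_le_image (hk.injOn hw) hpL)
    _ ≤ 12 * ((L.image k).card * Nat.clog 2 (L.image k).card) :=
        hk.isHorton_image.card_emptyPairs_le _ (Finset.mem_image_of_mem k hpL)
    _ ≤ 12 * (K * Nat.clog 2 K) := by gcongr

lemma card_stripPairs_wedge_left_le :
    (stripPairs g m p w (wedge w p) τ).card ≤ 12 * (K * Nat.clog 2 K) := by
  rcases eq_or_ne τ (wedge w p) with rfl | hτ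
  · exact card_stripPairs_self_le hg hw hp hK
  have hsub : stripPairs g m p w (wedge w p) τ ⊆ baseNeighbors g m w p ×ˢ latticeLine m w τ := by
    rintro ⟨a, b⟩ hab
    obtain ⟨hab, haσ, hbτ⟩ := mem_stripPairs.1 hab
    obtain ⟨⟨ha, hap⟩, ⟨hb, -⟩, -, hempty⟩ := mem_emptyPairs.1 hab
    exact Finset.mem_product.2 ⟨mem_baseNeighbors.2
      ⟨mem_latticeLine.2 ⟨ha, haσ⟩, hap, b, hb, hbτ ▸ hτ, hempty⟩, mem_latticeLine.2 ⟨hb, hbτ⟩⟩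
  calc (stripPairs g m p w (wedge w p) τ).card
      ≤ (baseNeighbors g m w p).card * (latticeLine m w τ).card :=
        (Finset.card_le_card hsub).trans (Finset.card_product _ _).le
    _ ≤ 2 * Nat.clog 2 K * K := Nat.mul_le_mul (card_baseNeighbors_le hg hw hK hp) (hK τ)
    _ ≤ 12 * (K * Nat.clog 2 K) := by linarith [Nat.zero_le (K * Nat.clog 2 K)]

lemma card_stripPairs_diag_le (hσ : σ ≠ wedge w p) :
    (stripPairs g m p w σ σ).card ≤ 12 * (K * Nat.clog 2 K) := by
  calc (stripPairs g m p w σ σ).card ≤ (latticeLine m w σ).card * (2 * Nat.clog 2 K) := by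
        refine card_le_mul_of_card_fiber_le (F := baseNeighbors g m w) ?_ fun a ha =>
          card_baseNeighbors_le hg hw hK (mem_latticeGrid_of_mem_latticeLine ha)
        rintro ⟨a, b⟩ hab
        obtain ⟨hab, haσ, hbσ⟩ := mem_stripPairs.1 hab
        obtain ⟨⟨ha, -⟩, ⟨hb, -⟩, hne, hempty⟩ := mem_emptyPairs.1 hab
        exact ⟨mem_latticeLine.2 ⟨ha, haσ⟩, mem_baseNeighbors.2
          ⟨mem_latticeLine.2 ⟨hb, hbσ.trans haσ.symm⟩, hne.symm, p, hp, haσ ▸ hσ.symm,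
            fun c hc => inTriangle_rotate.not.2 (hempty c hc)⟩⟩
    _ ≤ K * (2 * Nat.clog 2 K) := Nat.mul_le_mul_right _ (hK σ)
    _ ≤ 12 * (K * Nat.clog 2 K) := by linarith [Nat.zero_le (K * Nat.clog 2 K)]

lemma card_stripPairs_le (hστ : σ = wedge w p ∨ τ = wedge w p ∨ σ = τ) :
    (stripPairs g m p w σ τ).card ≤ 12 * (K * Nat.clog 2 K) := by
  rcases eq_or_ne σ (wedge w p) with rfl | hσ
  · exact card_stripPairs_wedge_left_le hg hw hp hK
  · rcases hστ.resolve_left hσ with rfl | rfl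
    · exact card_stripPairs_swap_le.trans (card_stripPairs_wedge_left_le hg hw hp hK)
    · exact card_stripPairs_diag_le hg hw hp hK hσ

end StripPairs

section Counting

variable {m d : ℕ} {g : ℤ × ℤ → ℝ × ℝ} {p w x y a b : ℤ × ℤ} {σ : ℤ}

lemma card_le_div_add_one_of_separated {ι : Type*} {L : Finset ι} {φ : ι → ℤ} (hd : 0 < d)
    (hφ : ∀ x ∈ L, 0 ≤ φ x ∧ φ x ≤ m)
    (hsep : ∀ x ∈ L, ∀ y ∈ L, x ≠ y → (d : ℤ) ≤ |φ x - φ y|) : L.card ≤ m / d + 1 := by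
  have hd' : (0 : ℤ) < d := Int.natCast_pos.2 hd
  have hcard : (Finset.Icc (0 : ℤ) (m / d : ℕ)).card = m / d + 1 := by
    rw [Int.card_Icc, sub_zero, Int.toNat_natCast_add_one]
  rw [← hcard]
  refine Finset.card_le_card_of_injOn (fun x => φ x / d) (fun x hx => ?_) fun x hx y hy hxy => ?_
  · rw [Finset.mem_coe, Finset.mem_Icc, Int.natCast_div]
    exact ⟨Int.ediv_nonneg (hφ x hx).1 hd'.le, Int.ediv_le_ediv hd' (hφ x hx).2⟩
  · by_contra hne
    refine (hsep x hx y hy hne).not_gt ?_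
    have hxy : φ x / d = φ y / d := hxy
    have hx' := Int.mul_ediv_add_emod (φ x) d
    have hy' := Int.mul_ediv_add_emod (φ y) d
    rw [hxy] at hx'
    have := Int.emod_nonneg (φ x) hd'.ne'
    have := Int.emod_nonneg (φ y) hd'.ne'
    have := Int.emod_lt_of_pos (φ x) hd'
    have := Int.emod_lt_of_pos (φ y) hd'
    exact abs_lt.2 ⟨by linarith, by linarith⟩

/-- The primitive lattice vectors of sup norm `d`. -/
def primitiveVectors (d : ℕ) : Finset (ℤ × ℤ) :=
  (Finset.box d).filter fun w => IsCoprime w.1 w.2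

lemma mem_primitiveVectors :
    w ∈ primitiveVectors d ↔ max w.1.natAbs w.2.natAbs = d ∧ IsCoprime w.1 w.2 := by
  simp only [primitiveVectors, Finset.mem_filter, Int.mem_box]

lemma pos_of_mem_primitiveVectors (hw : w ∈ primitiveVectors d) : 0 < d := by
  obtain ⟨rfl, hcop⟩ := mem_primitiveVectors.1 hw
  rw [Nat.pos_iff_ne_zero]
  intro h0
  have h1 : w.1 = 0 := by omega
  have h2 : w.2 = 0 := by omega
  exact not_isCoprime_zero_zero (h1 ▸ h2 ▸ hcop)

lemma card_primitiveVectors_le (hd : d ≠ 0) : (primitiveVectors d).card ≤ 8 * d :=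
  (Finset.card_filter_le _ _).trans (Int.card_box hd).le

lemma card_latticeLine_le (hw : w ∈ primitiveVectors d) :
    (latticeLine m w σ).card ≤ m / d + 1 := by
  have hd := pos_of_mem_primitiveVectors hw
  obtain ⟨hwd, hw⟩ := mem_primitiveVectors.1 hw
  have bound (φ : ℤ × ℤ →+ ℤ) (hφ : ∀ x ∈ latticeGrid m, 1 ≤ φ x ∧ φ x ≤ m)
      (hφw : (φ w).natAbs = d) : (latticeLine m w σ).card ≤ m / d + 1 := by
    refine card_le_div_add_one_of_separated (φ := φ) hd (fun x hx => ?_) fun x hx y hy hxy => ?_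
    · have := hφ x (mem_latticeGrid_of_mem_latticeLine hx)
      omega
    · obtain ⟨j, rfl⟩ := exists_eq_add_smul_of_mem_latticeLine hw hx hy
      have hj : j ≠ 0 := by
        rintro rfl
        simp at hxy
      rw [map_add, sub_add_cancel_left, abs_neg, map_zsmul, smul_eq_mul, abs_mul,
        ← Int.natCast_natAbs (φ w), hφw]
      exact le_mul_of_one_le_left (Int.natCast_nonneg d) (Int.one_le_abs hj)
  rcases le_total w.1.natAbs w.2.natAbs with h | h
  · exact bound (.snd ℤ ℤ) (fun x hx => (mem_latticeGrid.1 hx).2) (by rwa [max_eq_right h] at hwd)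
  · exact bound (.fst ℤ ℤ) (fun x hx => (mem_latticeGrid.1 hx).1) (by rwa [max_eq_left h] at hwd)

lemma exists_mem_primitiveVectors_of_smul {t : ℤ} (hx : x ∈ latticeGrid m) (hy : y ∈ latticeGrid m)
    (hw : IsCoprime w.1 w.2) (ht : t ≠ 0) (hxy : y - x = t • w) :
    ∃ d ∈ Finset.Icc 1 m, w ∈ primitiveVectors d := by
  have hwd : w ∈ primitiveVectors (max w.1.natAbs w.2.natAbs) := mem_primitiveVectors.2 ⟨rfl, hw⟩
  have le_natAbs_mul (s : ℤ) : s.natAbs ≤ (t * s).natAbs := by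
    rw [Int.natAbs_mul]
    exact Nat.le_mul_of_pos_left _ (Int.natAbs_pos.2 ht)
  have h1 : y.1 - x.1 = t * w.1 := congrArg Prod.fst hxy
  have h2 : y.2 - x.2 = t * w.2 := congrArg Prod.snd hxy
  have hxm := mem_latticeGrid.1 hx
  have hym := mem_latticeGrid.1 hy
  exact ⟨_, Finset.mem_Icc.2 ⟨pos_of_mem_primitiveVectors hwd,
    max_le ((le_natAbs_mul w.1).trans (by omega)) ((le_natAbs_mul w.2).trans (by omega))⟩, hwd⟩

lemma exists_mem_stripPairs (hg : PreservesOrientationOn g (latticeGrid m))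
    (hp : p ∈ latticeGrid m) (hab : (a, b) ∈ emptyPairs g (latticeGrid m) p) :
    ∃ d ∈ Finset.Icc 1 m, ∃ w ∈ primitiveVectors d, ∃ δ ∈ hollowOffsets,
      (a, b) ∈ stripPairs g m p w (wedge w p + δ.1) (wedge w p + δ.2) := by
  obtain ⟨⟨ha, hap⟩, ⟨hb, hbp⟩, -, hempty⟩ := mem_emptyPairs.1 hab
  obtain ⟨w, hw, hδ, x, hx, y, hy, t, ht, hxy⟩ := exists_isThinAlong hap hbp fun x hx =>
    have hxm := mem_latticeGrid_of_inTriangle hp ha hb hx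
    hempty x hxm (hg.inTriangle hp ha hb hxm hx)
  have mem_grid {x : ℤ × ℤ} (hx : x ∈ ({p, a, b} : Set (ℤ × ℤ))) : x ∈ latticeGrid m := by
    rcases hx with rfl | rfl | rfl <;> assumption
  obtain ⟨d, hd, hwd⟩ := exists_mem_primitiveVectors_of_smul (mem_grid hx) (mem_grid hy) hw ht hxy
  exact ⟨d, hd, w, hwd, _, hδ, mem_stripPairs.2 ⟨hab, by simp [wedge_sub_right],
    by simp [wedge_sub_right]⟩⟩

lemma sum_clog_two_div_add_one_le (m : ℕ) :
    ∑ d ∈ Finset.Icc 1 m, Nat.clog 2 (m / d + 1) ≤ 2 * m := by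
  have clog_le {d : ℕ} (hd : d ∈ Finset.Icc 1 m) : Nat.clog 2 (m / d + 1) ≤
      ((Finset.range m).bipartiteAbove (fun d j => d ≤ m / 2 ^ j) d).card := by
    rw [← Finset.card_range (Nat.clog 2 (m / d + 1))]
    refine Finset.card_le_card fun j hj => ?_
    have hj : 2 ^ j ≤ m / d := Nat.lt_succ_iff.1
      ((Nat.lt_clog_iff_pow_lt one_lt_two).1 (Finset.mem_range.1 hj))
    refine (Finset.mem_bipartiteAbove _).2 ⟨Finset.mem_range.2 ?_, ?_⟩
    · exact Nat.lt_two_pow_self.trans_le (hj.trans (Nat.div_le_self m d))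
    · rw [Nat.le_div_iff_mul_le (Finset.mem_Icc.1 hd).1] at hj
      rwa [Nat.le_div_iff_mul_le (by positivity), mul_comm]
  have card_le (j : ℕ) :
      ((Finset.Icc 1 m).bipartiteBelow (fun d j => d ≤ m / 2 ^ j) j).card ≤ m / 2 ^ j := by
    refine (Finset.card_le_card (t := Finset.Icc 1 (m / 2 ^ j)) fun d hd => ?_).trans
      (by rw [Nat.card_Icc, Nat.add_sub_cancel])
    obtain ⟨hdm, hdj⟩ := (Finset.mem_bipartiteBelow _).1 hd
    exact Finset.mem_Icc.2 ⟨(Finset.mem_Icc.1 hdm).1, hdj⟩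
  calc ∑ d ∈ Finset.Icc 1 m, Nat.clog 2 (m / d + 1)
      ≤ ∑ j ∈ Finset.range m, m / 2 ^ j := by
        refine (Finset.sum_le_sum fun d => clog_le).trans ?_
        rw [Finset.sum_card_bipartiteAbove_eq_sum_card_bipartiteBelow]
        exact Finset.sum_le_sum fun j _ => card_le j
    _ ≤ 2 * m := (Nat.geom_sum_le le_rfl m m).trans (by simp [mul_comm])

theorem HasHortonLines.card_emptyPairs_le (hg : HasHortonLines m g) (hp : p ∈ latticeGrid m) :
    (emptyPairs g (latticeGrid m) p).card ≤ 3072 * m ^ 2 := by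
  let strips (d : ℕ) : Finset ((ℤ × ℤ) × (ℤ × ℤ)) := (primitiveVectors d).biUnion fun w =>
    hollowOffsets.biUnion fun δ => stripPairs g m p w (wedge w p + δ.1) (wedge w p + δ.2)
  have hsub : emptyPairs g (latticeGrid m) p ⊆ (Finset.Icc 1 m).biUnion strips := fun ab hab => by
    simpa only [strips, Finset.mem_biUnion] using exists_mem_stripPairs hg.preserves hp hab
  have offset_cases : ∀ δ ∈ hollowOffsets, δ.1 = 0 ∨ δ.2 = 0 ∨ δ.1 = δ.2 := by decide
  have card_strips_le {d : ℕ} (hd : d ∈ Finset.Icc 1 m) :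
      (strips d).card ≤ 1536 * m * Nat.clog 2 (m / d + 1) := by
    have hd1 := (Finset.mem_Icc.1 hd).1
    have hdm := (Finset.mem_Icc.1 hd).2
    set K := m / d + 1
    have hdK : d * K ≤ 2 * m := by
      rw [mul_add, mul_one, two_mul]
      exact add_le_add (Nat.mul_div_le m d) hdm
    calc (strips d).card ≤ (primitiveVectors d).card * (8 * (12 * (K * Nat.clog 2 K))) := by
          refine Finset.card_biUnion_le_card_mul _ _ _ fun w hw =>
            Finset.card_biUnion_le_card_mul _ _ _ fun δ hδ =>
              card_stripPairs_le hg (mem_primitiveVectors.1 hw).2 hp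
                (fun σ => card_latticeLine_le hw) ?_
          simpa using offset_cases δ hδ
      _ ≤ 8 * d * (8 * (12 * (K * Nat.clog 2 K))) := by
          gcongr
          exact card_primitiveVectors_le (by omega)
      _ = 768 * Nat.clog 2 K * (d * K) := by ring
      _ ≤ 768 * Nat.clog 2 K * (2 * m) := by gcongr
      _ = 1536 * m * Nat.clog 2 K := by ring
  calc (emptyPairs g (latticeGrid m) p).card ≤ ∑ d ∈ Finset.Icc 1 m, (strips d).card :=
        (Finset.card_le_card hsub).trans Finset.card_biUnion_le
    _ ≤ 1536 * m * ∑ d ∈ Finset.Icc 1 m, Nat.clog 2 (m / d + 1) := by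
        rw [Finset.mul_sum]
        exact Finset.sum_le_sum fun d => card_strips_le
    _ ≤ 1536 * m * (2 * m) := Nat.mul_le_mul_left _ (sum_clog_two_div_add_one_le m)
    _ = 3072 * m ^ 2 := by ring

end Counting

/-- Every point of a squared Horton set of `n = m²` points is a vertex of `O(n)` empty
triangles. -/
theorem squared_horton_incident_bound :
    ∃ C : ℝ, 0 < C ∧ ∀ (m : ℕ) (ε : ℝ) (f : ℝ × ℝ → ℝ × ℝ),
      IsSquaredHorton m ε f → ∀ q ∈ (grid m).image f,
        (incidentCount ↑((grid m).image f) q : ℝ) ≤ C * (m : ℝ) ^ 2 := by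
  refine ⟨3072, by norm_num, ?_⟩
  intro m ε f h q hq
  rw [grid_eq_image_latticeGrid, Finset.image_image] at hq ⊢
  obtain ⟨p, hp, rfl⟩ := Finset.mem_image.1 hq
  exact_mod_cast (incidentCount_le_card_emptyPairs (f ∘ latticePoint) _ p).trans
    (h.hasHortonLines.card_emptyPairs_le hp)
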